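/- arXiv:2311.07543 — 4 statements merged into one kernel-verified Lean document; each statement's English description precedes it below -/
import Mathlib

section
/- For all i, j, k, l ∈ {1,…,n}, the following identities of operators on L hold: E^q_{ij}E^q_{kl} − E^q_{il}E^q_{kj} = E^q_{il}S^q_{jk} − E^q_{ij}S^q_{lk}, and E^q_{ij}E^q_{kl} − E^q_{kj}E^q_{il} = S^q_{jk}E^q_{il} − S^q_{ji}E^q_{kl}. -/
noncomputable section

/-- The Laurent polynomial ring `R[X₁^{±1}, …, Xₙ^{±1}]` in `n` variables over `R`,
realised as the monoid algebra of the additive monoid `Fin n →₀ ℤ` of exponent vectors. -/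
abbrev Laur (R : Type*) [CommRing R] (n : ℕ) : Type _ :=
  AddMonoidAlgebra R (Fin n →₀ ℤ)

variable {R : Type*} [CommRing R] {n : ℕ}

/-- The monomial `c · X^a`. -/
def mono (a : Fin n →₀ ℤ) (c : R) : Laur R n := AddMonoidAlgebra.single a c

/-- The generator `X_i`. -/
def Xel (i : Fin n) : Laur R n := mono (Finsupp.single i 1) 1

/-- The element `X_i⁻¹`. -/
def XinvEl (i : Fin n) : Laur R n := mono (Finsupp.single i (-1)) 1

/-- Multiplication by a Laurent polynomial, as a linear endomorphism. -/
def mulOp (x : Laur R n) : Module.End R (Laur R n) := LinearMap.mulLeft R x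

/-- The operator of multiplication by `X_i`, with `ℕ`-indexing (`0`-based; junk value `1`
out of range). -/
def XOp (i : ℕ) : Module.End R (Laur R n) :=
  if h : i < n then mulOp (Xel ⟨i, h⟩) else 1

/-- The operator of multiplication by `X_i⁻¹`, with `ℕ`-indexing. -/
def XinvOp (i : ℕ) : Module.End R (Laur R n) :=
  if h : i < n then mulOp (XinvEl ⟨i, h⟩) else 1

/-- Ascending product `f s * f (s+1) * ⋯ * f (s+len-1)` (equal to `1` when `len = 0`). -/
def aF {M : Type*} [Monoid M] (f : ℕ → M) (s len : ℕ) : M :=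
  ((List.range' s len).map f).prod

/-- Descending product `f (s+len-1) * ⋯ * f (s+1) * f s` (equal to `1` when `len = 0`). -/
def dF {M : Type*} [Monoid M] (f : ℕ → M) (s len : ℕ) : M :=
  (((List.range' s len).map f).reverse).prod

/-- Integer power `u^z`, where `v` is a designated (two-sided) inverse of `u`. -/
def zpowOp {M : Type*} [Monoid M] (u v : M) (z : ℤ) : M :=
  if 0 ≤ z then u ^ z.toNat else v ^ (-z).toNat

/-!
The operators `X_i` commute with each other, and so do the `d_i`: each `d_i` is `X_i⁻¹` times an
operator that is diagonal on monomials, with eigenvalue depending on the `i`-th exponent alone, and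
such an operator commutes with `X_j⁻¹` for `j ≠ i` and with every other diagonal operator. By
expansion in the operator ring, the first identity says that `X_i [d_j, d_l] X_k = 0` and the second
that `d_j [X_i, X_k] d_l = 0`.
-/

theorem mul_mul_sub_mul_mul_eq_mul_lie_sub_of_commute {A : Type*} [Ring A] {d e : A}
    (h : Commute d e) (x y : A) :
    x * d * (y * e) - x * e * (y * d) = x * e * ⁅d, y⁆ - x * d * ⁅e, y⁆ := by
  have hmid : x * (d * e) * y = x * (e * d) * y := by rw [h.eq]
  rw [Ring.lie_def, Ring.lie_def]
  simp only [mul_sub, mul_assoc] at hmid ⊢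
  rw [hmid]
  abel

theorem mul_mul_sub_mul_mul_eq_lie_mul_sub_of_commute {A : Type*} [Ring A] {x y : A}
    (h : Commute x y) (d e : A) :
    x * d * (y * e) - y * d * (x * e) = ⁅d, y⁆ * (x * e) - ⁅d, x⁆ * (y * e) := by
  have hmid : d * (x * y) * e = d * (y * x) * e := by rw [h.eq]
  rw [Ring.lie_def, Ring.lie_def]
  simp only [sub_mul, mul_assoc] at hmid ⊢
  rw [hmid]
  abel

theorem commute_mulOp (x y : Laur R n) : Commute (mulOp x) (mulOp y) :=
  (Commute.all x y).map (Algebra.lmul R (Laur R n))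

theorem mulOp_mono_apply_mono (a b : Fin n →₀ ℤ) (r s : R) :
    mulOp (mono a r) (mono b s) = mono (a + b) (r * s) :=
  AddMonoidAlgebra.single_mul_single ..

theorem mono_lhom_ext {M : Type*} [AddCommMonoid M] [Module R M] {f g : Laur R n →ₗ[R] M}
    (h : ∀ (a : Fin n →₀ ℤ) (c : R), f (mono a c) = g (mono a c)) : f = g :=
  AddMonoidAlgebra.lhom_ext' fun a => LinearMap.ext (h a)

/-- `T` is diagonal in the basis of monomials, with eigenvalue `w a` on `X^a`. -/
def IsDiagonalOp (T : Module.End R (Laur R n)) (w : (Fin n →₀ ℤ) → R) : Prop :=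
  ∀ (a : Fin n →₀ ℤ) (c : R), T (mono a c) = w a • mono a c

namespace IsDiagonalOp

variable {T U : Module.End R (Laur R n)} {w v : (Fin n →₀ ℤ) → R}

theorem sub (hT : IsDiagonalOp T w) (hU : IsDiagonalOp U v) :
    IsDiagonalOp (T - U) fun a => w a - v a := fun a c => by
  rw [LinearMap.sub_apply, hT, hU, sub_smul]

theorem const_smul (hT : IsDiagonalOp T w) (r : R) :
    IsDiagonalOp (r • T) fun a => r * w a := fun a c => by
  rw [LinearMap.smul_apply, hT, mul_smul]

theorem commute (hT : IsDiagonalOp T w) (hU : IsDiagonalOp U v) : Commute T U :=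
  mono_lhom_ext fun a c => by
    change T (U (mono a c)) = U (T (mono a c))
    rw [hU, hT, map_smul, map_smul, hT, hU, smul_comm]

theorem commute_mulOp_mono (hT : IsDiagonalOp T w) {b : Fin n →₀ ℤ}
    (hw : ∀ a, w (b + a) = w a) (r : R) : Commute T (mulOp (mono b r)) :=
  mono_lhom_ext fun a c => by
    change T (mulOp (mono b r) (mono a c)) = mulOp (mono b r) (T (mono a c))
    rw [hT, map_smul, mulOp_mono_apply_mono, hT, hw]

end IsDiagonalOp

theorem commute_mulOp_XinvEl_mul {T : Fin n → Module.End R (Laur R n)} {φ : Fin n → ℤ → R}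
    (hT : ∀ i, IsDiagonalOp (T i) fun a => φ i (a i)) (i j : Fin n) :
    Commute (mulOp (XinvEl i) * T i) (mulOp (XinvEl j) * T j) := by
  obtain rfl | hij := eq_or_ne i j
  · exact Commute.refl _
  have commute_Xinv {k l : Fin n} (hkl : k ≠ l) : Commute (T k) (mulOp (XinvEl l)) :=
    (hT k).commute_mulOp_mono (fun a => by simp [hkl]) 1
  exact ((commute_mulOp _ _).mul_right (commute_Xinv hij.symm).symm).mul_left
    ((commute_Xinv hij).mul_right ((hT i).commute (hT j)))

/-- Taking `φ i m` to be the `q`-integer `(q ^ m - q ^ (-m)) / (q - q⁻¹)` makes `d i` the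
`q`-difference operator, while `φ i m = m` makes it the partial derivative in `X_i`. -/
theorem statement0_general {T : Fin n → Module.End R (Laur R n)} {φ : Fin n → ℤ → R}
    (hT : ∀ i, IsDiagonalOp (T i) fun a => φ i (a i))
    {d : Fin n → Module.End R (Laur R n)} (hd : ∀ i, d i = mulOp (XinvEl i) * T i)
    {E : Fin n → Fin n → Module.End R (Laur R n)} (hE : ∀ i j, E i j = mulOp (Xel i) * d j)
    {S : Fin n → Fin n → Module.End R (Laur R n)}
    (hS : ∀ i j, S i j = d i * mulOp (Xel j) - mulOp (Xel j) * d i) (i j k l : Fin n) :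
    (E i j * E k l - E i l * E k j = E i l * S j k - E i j * S l k) ∧
      (E i j * E k l - E k j * E i l = S j k * E i l - S j i * E k l) := by
  have commute_d : Commute (d j) (d l) := by
    simpa only [hd] using commute_mulOp_XinvEl_mul hT j l
  simp only [hE, hS, ← Ring.lie_def]
  exact ⟨mul_mul_sub_mul_mul_eq_mul_lie_sub_of_commute commute_d _ _,
    mul_mul_sub_mul_mul_eq_lie_mul_sub_of_commute (commute_mulOp _ _) _ _⟩

/-- The quadratic relations among the operators `E^q_{ij} = X_i d_j`
on the Laurent polynomial ring, with `S^q_{ij} = [d_i, X_j]`. -/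
theorem statement0
    (F : Type*) [Field F] (n : ℕ) [NeZero n]
    (q : F) (hq : q ≠ 0) (hqroot : ∀ m : ℕ, m ≠ 0 → q ^ m ≠ 1)
    -- the q-shift operators `t_i` and their inverses
    (t ti : Fin n → Module.End F (Laur F n))
    (ht : ∀ (i : Fin n) (a : Fin n →₀ ℤ) (c : F), t i (mono a c) = q ^ (a i) • mono a c)
    (hti : ∀ (i : Fin n) (a : Fin n →₀ ℤ) (c : F), ti i (mono a c) = q ^ (-(a i)) • mono a c)
    -- the operators `d_i = (q - q⁻¹)⁻¹ X_i⁻¹ (t_i - t_i⁻¹)`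
    (d : Fin n → Module.End F (Laur F n))
    (hd : ∀ i, d i = (q - q⁻¹)⁻¹ • (mulOp (XinvEl i) * (t i - ti i)))
    -- the operators `E^q_{ij} = X_i · d_j`
    (E : Fin n → Fin n → Module.End F (Laur F n))
    (hE : ∀ i j, E i j = mulOp (Xel i) * d j)
    -- the operators `S^q_{ij} = [d_i, X_j]`
    (S : Fin n → Fin n → Module.End F (Laur F n))
    (hS : ∀ i j, S i j = d i * mulOp (Xel j) - mulOp (Xel j) * d i)
    :
    ∀ i j k l : Fin n,
      (E i j * E k l - E i l * E k j = E i l * S j k - E i j * S l k) ∧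
      (E i j * E k l - E k j * E i l = S j k * E i l - S j i * E k l) := by
  exact statement0_general (φ := fun _ m => (q - q⁻¹)⁻¹ * (q ^ m - q ^ (-m)))
    (fun i => (IsDiagonalOp.sub (ht i) (hti i)).const_smul (q - q⁻¹)⁻¹)
    (fun i => (hd i).trans (mul_smul_comm _ _ _).symm) hE hS
end
end

section
/- An element f ∈ A commutes with every element of A if and only if f is a ℂ-linear combination of the operators (t_1t_2⋯t_n)^m with m ∈ ℤ; that is, the centre of A is the subalgebra generated by t_1t_2⋯t_n and its inverse. -/
noncomputable section

variable {R : Type*} [CommRing R] {n : ℕ}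

/-- The generating set of the algebra `A`: the operators `t_i`, `t_i⁻¹` and
`E^q_{ij}` for `i ≠ j`. -/
def qGenSet {F : Type*} [Field F] {n : ℕ} (t ti : Fin n → Module.End F (Laur F n))
    (E : Fin n → Fin n → Module.End F (Laur F n)) : Set (Module.End F (Laur F n)) :=
  {f | (∃ i, f = t i) ∨ (∃ i, f = ti i) ∨ (∃ i j, i ≠ j ∧ f = E i j)}

/-!
The `q`-shifts act diagonally on monomials: a Laurent polynomial `P` in `t₁, …, tₙ` multiplies
`X^a` by the value `P(q^a)`, and these values determine `P` because distinct powers of `q` give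
distinct, hence linearly independent, characters of `ℤⁿ`. Every element of `A` is a sum of
operators `X^b P(t)`, so its diagonal matrix entries are again the values of a Laurent polynomial.
An operator commuting with all `tᵢ` is diagonal, because the `tᵢ` separate the monomials; a central
element is therefore of the form `P(t)`. Now `E^q_{ij}` is `Xᵢ Xⱼ⁻¹` times a nonzero polynomial in
`tⱼ`. Moving `P(t)` past `Xᵢ Xⱼ⁻¹` rescales the coefficient of `X^c` in `P` by `q^(cᵢ - cⱼ)`, and
Laurent polynomials form a domain, so `P(t)` commutes with `E^q_{ij}` exactly when `cᵢ = cⱼ` for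
every exponent `c` of `P`. Imposed for all `i ≠ j`, this says that `P` is a combination of powers
of `X₁ ⋯ Xₙ`.
-/

section ProductSubalgebra

variable {k A : Type*} [CommSemiring k] [Semiring A] [Algebra k A]

/-- The product `S * T` of two subalgebras, a subalgebra when elements of `T` can be moved past
those of `S`. -/
def productSubalgebra (S T : Subalgebra k A)
    (hTS : T.toSubmodule * S.toSubmodule ≤ S.toSubmodule * T.toSubmodule) : Subalgebra k A :=
  (S.toSubmodule * T.toSubmodule).toSubalgebra
    (mul_one (1 : A) ▸ Submodule.mul_mem_mul S.one_mem T.one_mem)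
    (by
      intro x y hx hy
      have hST : S.toSubmodule * T.toSubmodule * (S.toSubmodule * T.toSubmodule) ≤
          S.toSubmodule * T.toSubmodule :=
        calc S.toSubmodule * T.toSubmodule * (S.toSubmodule * T.toSubmodule)
          _ = S.toSubmodule * (T.toSubmodule * S.toSubmodule) * T.toSubmodule := by
            simp only [mul_assoc]
          _ ≤ S.toSubmodule * (S.toSubmodule * T.toSubmodule) * T.toSubmodule := by gcongr
          _ = S.toSubmodule * S.toSubmodule * (T.toSubmodule * T.toSubmodule) := by
            simp only [mul_assoc]
          _ = S.toSubmodule * T.toSubmodule := by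
            rw [S.isIdempotentElem_toSubmodule.eq, T.isIdempotentElem_toSubmodule.eq]
      exact hST (Submodule.mul_mem_mul hx hy))

theorem mul_mem_productSubalgebra {S T : Subalgebra k A}
    (hTS : T.toSubmodule * S.toSubmodule ≤ S.toSubmodule * T.toSubmodule) {s t : A}
    (hs : s ∈ S) (ht : t ∈ T) : s * t ∈ productSubalgebra S T hTS :=
  Submodule.mul_mem_mul hs ht

end ProductSubalgebra

section DiagonalOperators

open AddMonoidAlgebra

variable {k G : Type*} [CommSemiring k]

/-- The diagonal operator `X^a ↦ w a • X^a` with eigenvalue function `w`. -/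
def diagonalOp : (G → k) →ₐ[k] Module.End k k[G] :=
  ((coeffLinearEquiv k).symm.conjAlgEquiv k).toAlgHom.comp (Algebra.lsmul k k (G →₀ k))

@[simp]
theorem coeff_diagonalOp_apply (w : G → k) (x : k[G]) (a : G) :
    (diagonalOp w x).coeff a = w a * x.coeff a :=
  rfl

@[simp]
theorem diagonalOp_single (w : G → k) (a : G) (r : k) :
    diagonalOp w (single a r) = single a (w a * r) := by
  ext b
  by_cases hab : a = b <;> simp [hab]

/-- The function `a ↦ ⟨X^a, f X^a⟩` of diagonal matrix entries of `f`. -/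
def diagonalPart : Module.End k k[G] →ₗ[k] (G → k) where
  toFun f a := (f (single a 1)).coeff a
  map_add' _ _ := rfl
  map_smul' _ _ := rfl

theorem diagonalPart_apply (f : Module.End k k[G]) (a : G) :
    diagonalPart f a = (f (single a 1)).coeff a :=
  rfl

theorem eq_diagonalOp_of_commute [IsCancelMulZero k] {f : Module.End k k[G]}
    (hf : ∀ a b, a ≠ b → ∃ w : G → k, w a ≠ w b ∧ Commute f (diagonalOp w)) :
    f = diagonalOp (diagonalPart f) := by
  ext a b
  by_cases hab : a = b
  · simp [hab, diagonalPart_apply]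
  obtain ⟨w, hw, hcomm⟩ := hf a b hab
  have hentry : w a * (f (single a 1)).coeff b = w b * (f (single a 1)).coeff b := by
    have hwa : f (diagonalOp w (single a 1)) = w a • f (single a 1) := by
      rw [diagonalOp_single, ← smul_eq_mul, ← smul_single, map_smul]
    simpa only [Module.End.mul_apply, hwa, coeff_smul, Finsupp.smul_apply, smul_eq_mul,
      coeff_diagonalOp_apply] using congr(($hcomm.eq (single a 1)).coeff b)
  have hzero : (f (single a 1)).coeff b = 0 :=
    of_not_not fun h => hw (mul_right_cancel₀ h hentry)
  simp [hzero, hab]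

variable [AddGroup G]

theorem diagonalPart_mulLeft_mul_diagonalOp (x : k[G]) (w : G → k) :
    diagonalPart (LinearMap.mulLeft k x * diagonalOp w) = x.coeff 0 • w := by
  ext a
  simp [diagonalPart_apply]

theorem diagonalOp_mul_mulLeft_single (w : G → k) (b : G) (r : k) :
    diagonalOp w * LinearMap.mulLeft k (single b r) =
      LinearMap.mulLeft k (single b r) * diagonalOp fun a => w (b + a) := by
  ext a : 2
  simp only [LinearMap.coe_comp, Function.comp_apply, lsingle_apply, Module.End.mul_apply,
    LinearMap.mulLeft_apply, single_mul_single, mul_one, diagonalOp_single, one_mul, mul_comm r]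

theorem commute_diagonalOp_mulLeft_single_mul_diagonalOp_iff (w v : G → k) (b : G) :
    Commute (diagonalOp w) (LinearMap.mulLeft k (single b 1) * diagonalOp v) ↔
      ∀ a, w (b + a) * v a = w a * v a := by
  have hleft : Function.Injective fun u : G → k =>
      LinearMap.mulLeft k (single b 1) * diagonalOp u := by
    intro u u' h
    ext a
    simpa using congr(($h (single a 1)).coeff (b + a))
  rw [commute_iff_eq, ← mul_assoc, diagonalOp_mul_mulLeft_single, mul_assoc, mul_assoc,
    ← map_mul, ← map_mul, mul_comm v w, hleft.eq_iff, funext_iff]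
  rfl

theorem map_diagonalOp_mul_range_lmul_le {S : Subalgebra k (G → k)}
    (hS : ∀ w ∈ S, ∀ b, (fun a => w (b + a)) ∈ S) :
    (S.map diagonalOp).toSubmodule * (Algebra.lmul k k[G]).range.toSubmodule ≤
      (Algebra.lmul k k[G]).range.toSubmodule * (S.map diagonalOp).toSubmodule := by
  refine Submodule.mul_le.2 ?_
  rintro _ ⟨w, hw, rfl⟩ _ ⟨x, rfl⟩
  induction x using AddMonoidAlgebra.induction_linear with
  | zero => simp
  | add x y hx hy =>
    rw [map_add, mul_add]
    exact add_mem hx hy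
  | single b r =>
    exact (diagonalOp_mul_mulLeft_single w b r).symm ▸
      Submodule.mul_mem_mul ⟨_, rfl⟩ ⟨_, hS w hw b, rfl⟩

/-- The operators `∑ x_i • w_i`, a function `w_i ∈ S` acting diagonally and `x_i ∈ k[G]` acting by
multiplication. -/
def differenceOperators (S : Subalgebra k (G → k))
    (hS : ∀ w ∈ S, ∀ b, (fun a => w (b + a)) ∈ S) : Subalgebra k (Module.End k k[G]) :=
  productSubalgebra (Algebra.lmul k k[G]).range (S.map diagonalOp)
    (map_diagonalOp_mul_range_lmul_le hS)

theorem mulLeft_mul_diagonalOp_mem_differenceOperators {S : Subalgebra k (G → k)}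
    (hS : ∀ w ∈ S, ∀ b, (fun a => w (b + a)) ∈ S) (x : k[G]) {w : G → k} (hw : w ∈ S) :
    LinearMap.mulLeft k x * diagonalOp w ∈ differenceOperators S hS :=
  mul_mem_productSubalgebra _ ⟨x, rfl⟩ ⟨w, hw, rfl⟩

theorem diagonalPart_mem_of_mem_differenceOperators {S : Subalgebra k (G → k)}
    {hS : ∀ w ∈ S, ∀ b, (fun a => w (b + a)) ∈ S} {f : Module.End k k[G]}
    (hf : f ∈ differenceOperators S hS) : diagonalPart f ∈ S := by
  induction hf using Submodule.mul_induction_on' with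
  | mem_mul_mem m hm d hd =>
    obtain ⟨x, rfl⟩ := hm
    obtain ⟨w, hw, rfl⟩ := hd
    exact (diagonalPart_mulLeft_mul_diagonalOp x w).symm ▸ S.smul_mem hw _
  | add f _ g _ hf hg => exact map_add diagonalPart f g ▸ add_mem hf hg

end DiagonalOperators

section LaurentPolynomials

open AddMonoidAlgebra
open scoped Matrix

/-- The character `c ↦ q ^ ⟨a, c⟩` of the exponent lattice. -/
def qCharacter (q : Rˣ) (a : Fin n →₀ ℤ) : Multiplicative (Fin n →₀ ℤ) →* R where
  toFun c := (q ^ (a ⬝ᵥ c.toAdd) : Rˣ)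
  map_one' := by simp
  map_mul' c c' := by simp [zpow_add]

/-- Evaluation `P ↦ (a ↦ P(q^{a₁}, …, q^{aₙ}))` of a Laurent polynomial at the points `q^a`. -/
def qEval (q : Rˣ) : Laur R n →ₐ[R] ((Fin n →₀ ℤ) → R) :=
  AlgHom.pi fun a => AddMonoidAlgebra.lift R R _ (qCharacter q a)

@[simp]
theorem qEval_single (q : Rˣ) (c a : Fin n →₀ ℤ) (r : R) :
    qEval q (single c r) a = r * (q ^ (a ⬝ᵥ c) : Rˣ) :=
  AddMonoidAlgebra.lift_single (qCharacter q a) c r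

/-- Substitution `P ↦ P(t₁, …, tₙ)` of the `q`-shift operators `tᵢ` into a Laurent polynomial. -/
def qShiftEval (q : Rˣ) : Laur R n →ₐ[R] Module.End R (Laur R n) :=
  diagonalOp.comp (qEval q)

theorem qShiftEval_apply (q : Rˣ) (P : Laur R n) : qShiftEval q P = diagonalOp (qEval q P) :=
  rfl

theorem qEval_qShiftEval_single (q : Rˣ) (b a : Fin n →₀ ℤ) (P : Laur R n) :
    qEval q (qShiftEval q (single b 1) P) a = qEval q P (b + a) := by
  induction P using AddMonoidAlgebra.induction_linear with
  | zero => simp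
  | add P Q hP hQ => simp only [map_add, Pi.add_apply, hP, hQ]
  | single c r =>
    simp only [qShiftEval_apply, diagonalOp_single, qEval_single, one_mul, dotProduct_comm c b,
      Finsupp.coe_add, add_dotProduct, zpow_add, Units.val_mul]
    ring

variable {q : Rˣ}

theorem comp_add_left_mem_range_qEval {w : (Fin n →₀ ℤ) → R} (hw : w ∈ (qEval q).range)
    (b : Fin n →₀ ℤ) : (fun a => w (b + a)) ∈ (qEval q).range := by
  obtain ⟨P, rfl⟩ := hw
  exact ⟨qShiftEval q (single b 1) P, funext fun a => qEval_qShiftEval_single q b a P⟩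

/-- The algebra of `q`-difference operators on Laurent polynomials, generated by the
multiplications and the `q`-shifts. -/
def qDifferenceOperators (n : ℕ) (q : Rˣ) : Subalgebra R (Module.End R (Laur R n)) :=
  differenceOperators (qEval q).range fun _ hw => comp_add_left_mem_range_qEval hw

theorem mulLeft_mul_qShiftEval_mem_qDifferenceOperators (q : Rˣ) (x P : Laur R n) :
    LinearMap.mulLeft R x * qShiftEval q P ∈ qDifferenceOperators n q :=
  mulLeft_mul_diagonalOp_mem_differenceOperators _ x ⟨P, rfl⟩

theorem qShiftEval_mem_qDifferenceOperators (q : Rˣ) (P : Laur R n) :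
    qShiftEval q P ∈ qDifferenceOperators n q := by
  simpa only [LinearMap.mulLeft_one, ← Module.End.one_eq_id, one_mul] using
    mulLeft_mul_qShiftEval_mem_qDifferenceOperators q 1 P

theorem qCharacter_injective (hq : ¬IsOfFinOrder q) :
    Function.Injective (qCharacter (n := n) q) := by
  intro c c' h
  ext i
  have hi : q ^ c i = q ^ c' i :=
    Units.ext (by simpa [qCharacter, Finsupp.single_eq_pi_single] using
      DFunLike.congr_fun h (Multiplicative.ofAdd (Finsupp.single i 1)))
  exact injective_zpow_iff_not_isOfFinOrder.2 hq hi

section Domain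

variable [IsDomain R]

theorem linearIndependent_qCharacter (hq : ¬IsOfFinOrder q) :
    LinearIndependent R fun c : Fin n →₀ ℤ => (qCharacter q c : Multiplicative (Fin n →₀ ℤ) → R) :=
  (linearIndependent_monoidHom _ R).comp _ (qCharacter_injective hq)

theorem qEval_injective (hq : ¬IsOfFinOrder q) : Function.Injective (qEval (n := n) q) := by
  have heval : ∀ P : Laur R n, Finsupp.linearCombination R
      (fun c : Fin n →₀ ℤ => (qCharacter q c : Multiplicative (Fin n →₀ ℤ) → R)) P.coeff =
        fun a => qEval q P a.toAdd := by
    intro P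
    ext a
    simp only [qEval, qCharacter, AlgHom.pi_apply, AddMonoidAlgebra.lift_apply,
      Finsupp.linearCombination_apply, Finsupp.sum_apply', Pi.smul_apply, MonoidHom.coe_mk,
      OneHom.coe_mk, dotProduct_comm, toAdd_ofAdd]
  intro P Q h
  refine coeff_injective (linearIndependent_qCharacter hq ?_)
  rw [heval, heval, h]

theorem qShiftEval_single_apply_eq_self_iff (hq : ¬IsOfFinOrder q) (b : Fin n →₀ ℤ)
    (P : Laur R n) :
    qShiftEval q (single b 1) P = P ↔ ∀ c ∈ P.coeff.support, c ⬝ᵥ b = 0 := by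
  have hzpow : ∀ m : ℤ, q ^ m = 1 ↔ m = 0 := fun m => by
    simpa using (injective_zpow_iff_not_isOfFinOrder.2 hq).eq_iff (a := m) (b := 0)
  rw [← coeff_inj, Finsupp.ext_iff]
  refine forall_congr' fun c => ?_
  rw [qShiftEval_apply, coeff_diagonalOp_apply, qEval_single, one_mul, Finsupp.mem_support_iff,
    mul_left_eq_self₀, Units.val_eq_one, hzpow, or_iff_not_imp_right]

theorem commute_qShiftEval_mulLeft_single_mul_qShiftEval_iff (hq : ¬IsOfFinOrder q)
    (b : Fin n →₀ ℤ) (P : Laur R n) {V : Laur R n} (hV : V ≠ 0) :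
    Commute (qShiftEval q P) (LinearMap.mulLeft R (single b 1) * qShiftEval q V) ↔
      ∀ c ∈ P.coeff.support, c ⬝ᵥ b = 0 := by
  calc Commute (qShiftEval q P) (LinearMap.mulLeft R (single b 1) * qShiftEval q V)
    _ ↔ qEval q (qShiftEval q (single b 1) P * V) = qEval q (P * V) := by
      simp only [qShiftEval_apply q P, qShiftEval_apply q V,
        commute_diagonalOp_mulLeft_single_mul_diagonalOp_iff, funext_iff, map_mul, Pi.mul_apply,
        qEval_qShiftEval_single]
    _ ↔ qShiftEval q (single b 1) P = P := by
      rw [(qEval_injective hq).eq_iff, mul_left_inj' hV]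
    _ ↔ ∀ c ∈ P.coeff.support, c ⬝ᵥ b = 0 := qShiftEval_single_apply_eq_self_iff hq b P

end Domain

end LaurentPolynomials

section IntegerPowers

open AddMonoidAlgebra

theorem map_zpowOp {M N Φ : Type*} [Monoid M] [Monoid N] [FunLike Φ M N] [MonoidHomClass Φ M N]
    (φ : Φ) (u v : M) (m : ℤ) : φ (zpowOp u v m) = zpowOp (φ u) (φ v) m := by
  simp only [zpowOp, apply_ite φ, map_pow]

theorem zpowOp_single {k G : Type*} [Semiring k] [AddGroup G] (a : G) (m : ℤ) :
    zpowOp (single a (1 : k)) (single (-a) 1) m = single (m • a) 1 := by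
  rcases m with m | m
  · simp [zpowOp, single_pow]
  · have hm : ¬ 0 ≤ Int.negSucc m := by omega
    have hm' : (-Int.negSucc m).toNat = m + 1 := by omega
    rw [zpowOp, if_neg hm, hm', single_pow, one_pow, neg_nsmul, negSucc_zsmul]

end IntegerPowers

section ConstantExponents

open AddMonoidAlgebra

/-- The exponent `(1, …, 1)` of the monomial `X₁ ⋯ Xₙ`. -/
def onesExponent (n : ℕ) : Fin n →₀ ℤ :=
  ∑ i, Finsupp.single i 1

theorem forall_apply_eq_iff_mem_range_smul_onesExponent (c : Fin n →₀ ℤ) :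
    (∀ i j, c i = c j) ↔ c ∈ Set.range fun m : ℤ => m • onesExponent n := by
  have hones : ∀ i, onesExponent n i = 1 := fun i => by
    simp [onesExponent, Finsupp.single_apply]
  constructor
  · intro hc
    rcases isEmpty_or_nonempty (Fin n) with _ | ⟨⟨i⟩⟩
    · exact ⟨0, Subsingleton.elim _ _⟩
    · exact ⟨c i, Finsupp.ext fun j => by simp [hones, hc i j]⟩
  · rintro ⟨m, rfl⟩ i j
    simp [hones]

theorem prod_Xel : ((List.finRange n).map Xel).prod =
    (single (onesExponent n) 1 : Laur R n) := by
  rw [← List.ofFn_eq_map, List.prod_ofFn]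
  simp [Xel, mono, onesExponent, prod_single]

theorem prod_reverse_XinvEl : ((List.finRange n).map XinvEl).reverse.prod =
    (single (-onesExponent n) 1 : Laur R n) := by
  rw [List.prod_reverse, ← List.ofFn_eq_map, List.prod_ofFn]
  simp [XinvEl, mono, onesExponent, prod_single]

end ConstantExponents

section Centre

open AddMonoidAlgebra
open scoped Matrix

variable {F : Type*} [Field F]

/-- The Laurent polynomial `(q - q⁻¹)⁻¹ (Xⱼ - Xⱼ⁻¹)`, whose value at `q^a` is the `q`-number
`[aⱼ]`. -/
def qNumber (q : Fˣ) (j : Fin n) : Laur F n :=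
  ((q : F) - (q : F)⁻¹)⁻¹ • (Xel j - XinvEl j)

/-- The operator `E^q_{ij}`, written as the monomial `Xᵢ Xⱼ⁻¹` times a polynomial in the
`q`-shifts. -/
def qRootOp (q : Fˣ) (i j : Fin n) : Module.End F (Laur F n) :=
  LinearMap.mulLeft F (single (Finsupp.single i 1 - Finsupp.single j 1) 1) *
    qShiftEval q (qNumber q j)

/-- The algebra `A` generated by the `tᵢ`, `tᵢ⁻¹` and, for `i ≠ j`, the `E^q_{ij}`. -/
def qRootAlgebra (n : ℕ) (q : Fˣ) : Subalgebra F (Module.End F (Laur F n)) :=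
  Algebra.adjoin F (qGenSet (fun i => qShiftEval q (Xel i)) (fun i => qShiftEval q (XinvEl i))
    (qRootOp q))

variable {q : Fˣ}

theorem sub_inv_ne_zero (hq : ¬IsOfFinOrder q) : (q : F) - (q : F)⁻¹ ≠ 0 := by
  intro h
  have hq2 : q ^ 2 = 1 := by
    have hinv : q = q⁻¹ :=
      Units.ext (by simpa only [Units.val_inv_eq_inv_val] using sub_eq_zero.1 h)
    rw [sq, ← eq_inv_iff_mul_eq_one, ← hinv]
  exact hq (isOfFinOrder_iff_pow_eq_one.2 ⟨2, two_pos, hq2⟩)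

theorem qNumber_ne_zero (hq : ¬IsOfFinOrder q) (j : Fin n) : qNumber q j ≠ 0 := by
  have hX : (Xel j : Laur F n) ≠ XinvEl j := by
    intro h
    have hexponent : Finsupp.single j (1 : ℤ) = Finsupp.single j (-1) :=
      (single_left_inj (one_ne_zero (α := F))).1 h
    simpa using congr($hexponent j)
  exact smul_ne_zero (inv_ne_zero (sub_inv_ne_zero hq)) (sub_ne_zero.2 hX)

theorem eq_qShiftEval_Xel {f : Module.End F (Laur F n)} {i : Fin n}
    (hf : ∀ a c, f (mono a c) = (q : F) ^ a i • mono a c) : f = qShiftEval q (Xel i) := by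
  ext a : 2
  simpa [qShiftEval_apply, Xel, mono, Finsupp.single_eq_pi_single] using hf a 1

theorem eq_qShiftEval_XinvEl {f : Module.End F (Laur F n)} {i : Fin n}
    (hf : ∀ a c, f (mono a c) = (q : F) ^ (-a i) • mono a c) : f = qShiftEval q (XinvEl i) := by
  ext a : 2
  simpa [qShiftEval_apply, XinvEl, mono, Finsupp.single_eq_pi_single] using hf a 1

theorem mulOp_mul_smul_mulOp_mul_sub_eq_qRootOp (i j : Fin n) :
    mulOp (Xel i) * (((q : F) - (q : F)⁻¹)⁻¹ •
      (mulOp (XinvEl j) * (qShiftEval q (Xel j) - qShiftEval q (XinvEl j)))) = qRootOp q i j := by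
  have hX : (single (Finsupp.single i 1 - Finsupp.single j 1) 1 : Laur F n) =
      Xel i * XinvEl j := by
    simp [Xel, XinvEl, mono, single_mul_single, sub_eq_add_neg]
  rw [qRootOp, qNumber, map_smul, map_sub, hX, LinearMap.mulLeft_mul, mul_smul_comm, mul_smul_comm,
    ← mul_assoc]
  rfl

theorem qRootAlgebra_le_qDifferenceOperators (q : Fˣ) :
    qRootAlgebra n q ≤ qDifferenceOperators n q := by
  refine Algebra.adjoin_le ?_
  rintro _ (⟨i, rfl⟩ | ⟨i, rfl⟩ | ⟨i, j, -, rfl⟩)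
  · exact qShiftEval_mem_qDifferenceOperators q _
  · exact qShiftEval_mem_qDifferenceOperators q _
  · exact mulLeft_mul_qShiftEval_mem_qDifferenceOperators q _ _

theorem exists_eq_qShiftEval_of_commute (hq : ¬IsOfFinOrder q) {f : Module.End F (Laur F n)}
    (hf : f ∈ qRootAlgebra n q) (hcomm : ∀ i, Commute f (qShiftEval q (Xel i))) :
    ∃ P, f = qShiftEval q P := by
  obtain ⟨P, hP⟩ : diagonalPart f ∈ (qEval q).range :=
    diagonalPart_mem_of_mem_differenceOperators (qRootAlgebra_le_qDifferenceOperators q hf)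
  have hdiag : f = diagonalOp (diagonalPart f) := by
    refine eq_diagonalOp_of_commute fun a b hab => ?_
    obtain ⟨i, hi⟩ := Finsupp.ne_iff.1 hab
    refine ⟨qEval q (Xel i), fun h => hi ?_, hcomm i⟩
    have hzpow : q ^ a i = q ^ b i :=
      Units.ext (by simpa [Xel, mono, Finsupp.single_eq_pi_single] using h)
    exact injective_zpow_iff_not_isOfFinOrder.2 hq hzpow
  exact ⟨P, hdiag.trans (congrArg diagonalOp hP.symm)⟩

theorem commute_qShiftEval_qRootOp_iff (hq : ¬IsOfFinOrder q) (P : Laur F n) (i j : Fin n) :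
    Commute (qShiftEval q P) (qRootOp q i j) ↔ ∀ c ∈ P.coeff.support, c i = c j := by
  rw [qRootOp, commute_qShiftEval_mulLeft_single_mul_qShiftEval_iff hq _ _ (qNumber_ne_zero hq j)]
  simp [dotProduct_sub, Finsupp.single_eq_pi_single, sub_eq_zero]

theorem forall_commute_iff_exists_qShiftEval (hq : ¬IsOfFinOrder q) {f : Module.End F (Laur F n)}
    (hf : f ∈ qRootAlgebra n q) :
    (∀ g ∈ qRootAlgebra n q, f * g = g * f) ↔
      ∃ P : Laur F n, f = qShiftEval q P ∧ ∀ c ∈ P.coeff.support, ∀ i j, c i = c j := by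
  constructor
  · intro hcomm
    obtain ⟨P, rfl⟩ := exists_eq_qShiftEval_of_commute hq hf fun i =>
      hcomm _ (Algebra.subset_adjoin (.inl ⟨i, rfl⟩))
    refine ⟨P, rfl, fun c hc i j => ?_⟩
    obtain rfl | hij := eq_or_ne i j
    · rfl
    have hE := hcomm _ (Algebra.subset_adjoin (.inr (.inr ⟨i, j, hij, rfl⟩)))
    exact (commute_qShiftEval_qRootOp_iff hq P i j).1 hE c hc
  · rintro ⟨P, rfl, hP⟩ g hg
    refine Algebra.commute_of_mem_adjoin_of_forall_mem_commute hg ?_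
    rintro _ (⟨i, rfl⟩ | ⟨i, rfl⟩ | ⟨i, j, -, rfl⟩)
    · exact (Commute.all P (Xel i)).map (qShiftEval q)
    · exact (Commute.all P (XinvEl i)).map (qShiftEval q)
    · exact (commute_qShiftEval_qRootOp_iff hq P i j).2 fun c hc => hP c hc i j

theorem zpowOp_prod_qShiftEval_Xel (q : Fˣ) (m : ℤ) :
    zpowOp (((List.finRange n).map fun i => qShiftEval q (Xel i)).prod)
      ((((List.finRange n).map fun i => qShiftEval q (XinvEl i)).reverse).prod) m =
        qShiftEval q (single (m • onesExponent n) 1) := by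
  have ht : ((List.finRange n).map fun i => qShiftEval q (Xel i)).prod =
      qShiftEval q (single (onesExponent n) 1) := by
    rw [← prod_Xel, map_list_prod, List.map_map]
    rfl
  have hti : (((List.finRange n).map fun i => qShiftEval q (XinvEl i)).reverse).prod =
      qShiftEval q (single (-onesExponent n) 1) := by
    rw [← prod_reverse_XinvEl, map_list_prod, List.map_reverse, List.map_map]
    rfl
  rw [ht, hti, ← map_zpowOp, zpowOp_single]

theorem mem_span_range_zpowOp_iff_exists_qShiftEval {f : Module.End F (Laur F n)} :
    f ∈ Submodule.span F (Set.range fun m : ℤ =>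
      zpowOp (((List.finRange n).map fun i => qShiftEval q (Xel i)).prod)
        ((((List.finRange n).map fun i => qShiftEval q (XinvEl i)).reverse).prod) m) ↔
      ∃ P : Laur F n, f = qShiftEval q P ∧ ∀ c ∈ P.coeff.support, ∀ i j, c i = c j := by
  have hspan : Submodule.span F (Set.range fun m : ℤ =>
      zpowOp (((List.finRange n).map fun i => qShiftEval q (Xel i)).prod)
        ((((List.finRange n).map fun i => qShiftEval q (XinvEl i)).reverse).prod) m) =
      (supported F F (Set.range fun m : ℤ => m • onesExponent n)).map
        (qShiftEval q).toLinearMap := by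
    rw [supported_eq_span_single, Submodule.map_span, ← Set.range_comp, ← Set.range_comp]
    simp only [zpowOp_prod_qShiftEval_Xel]
    rfl
  simp only [hspan, Submodule.mem_map, mem_supported, Set.subset_def, SetLike.mem_coe,
    ← forall_apply_eq_iff_mem_range_smul_onesExponent, AlgHom.toLinearMap_apply]
  exact exists_congr fun P => and_comm.trans (and_congr_left' eq_comm)

end Centre

/-- The centre of the algebra `A`: an element `f ∈ A` commutes with every
element of `A` iff `f` is an `F`-linear combination of the operators `(t_1 ⋯ t_n)^m`, `m ∈ ℤ`. -/
theorem statement2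
    (F : Type*) [Field F] (n : ℕ) [NeZero n]
    (q : F) (hq : q ≠ 0) (hqroot : ∀ m : ℕ, m ≠ 0 → q ^ m ≠ 1)
    -- the q-shift operators `t_i` and their inverses
    (t ti : Fin n → Module.End F (Laur F n))
    (ht : ∀ (i : Fin n) (a : Fin n →₀ ℤ) (c : F), t i (mono a c) = q ^ (a i) • mono a c)
    (hti : ∀ (i : Fin n) (a : Fin n →₀ ℤ) (c : F), ti i (mono a c) = q ^ (-(a i)) • mono a c)
    -- the operators `d_i = (q - q⁻¹)⁻¹ X_i⁻¹ (t_i - t_i⁻¹)`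
    (d : Fin n → Module.End F (Laur F n))
    (hd : ∀ i, d i = (q - q⁻¹)⁻¹ • (mulOp (XinvEl i) * (t i - ti i)))
    -- the operators `E^q_{ij} = X_i · d_j`
    (E : Fin n → Fin n → Module.End F (Laur F n))
    (hE : ∀ i j, E i j = mulOp (Xel i) * d j)
    :
    ∀ f ∈ Algebra.adjoin F (qGenSet t ti E),
      ((∀ g ∈ Algebra.adjoin F (qGenSet t ti E), f * g = g * f) ↔
        f ∈ Submodule.span F (Set.range fun m : ℤ =>
              zpowOp (((List.finRange n).map t).prod)
                ((((List.finRange n).map ti).reverse).prod) m)) := by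
  obtain ⟨q, rfl⟩ := hq.isUnit
  have hfin : ¬IsOfFinOrder q := fun h =>
    have ⟨m, hm, hqm⟩ := isOfFinOrder_iff_pow_eq_one.1 h
    hqroot m hm.ne' (by rw [← Units.val_pow_eq_pow_val, hqm, Units.val_one])
  obtain rfl : t = fun i => qShiftEval q (Xel i) := funext fun i => eq_qShiftEval_Xel (ht i)
  obtain rfl : ti = fun i => qShiftEval q (XinvEl i) :=
    funext fun i => eq_qShiftEval_XinvEl (hti i)
  obtain rfl : E = qRootOp q := by
    ext1 i
    ext1 j
    rw [hE, hd, mulOp_mul_smul_mulOp_mul_sub_eq_qRootOp]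
  intro f hf
  rw [mem_span_range_zpowOp_iff_exists_qShiftEval]
  exact forall_commute_iff_exists_qShiftEval hfin hf
end
end

section
/- An element f ∈ 𝒜 commutes with every element of 𝒜 if and only if f is a ℂ-linear combination of the operators (t_1t_2⋯t_n)^m with m ∈ ℤ; in particular the centre of 𝒜 equals the centre of A and is generated by (t_1t_2⋯t_n)^{±1}. -/
noncomputable section

variable {R : Type*} [CommRing R] {n : ℕ}

/-!
Every element of `𝒜` is a combination, with Laurent polynomials as coefficients, of the
automorphisms `t^m w` with `m ∈ ℤⁿ` and `w ∈ 𝔖_n`. By Dedekind's independence theorem these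
coefficients are unique, so if the element commutes with `t_i` they are permuted by conjugation with
`t_i`. Since only finitely many are nonzero, each `t^m w` that occurs commutes with a nontrivial
power of every `t_i`; as `q` is not a root of unity, this forces `w = 1`, and then each coefficient
is fixed by every `t_i`, hence constant. So an element commuting with all `t_i` is `p(t_1, …, t_n)`
for a Laurent polynomial `p`. Moving it past `E^q_{ij}` replaces `p` by its image under
`t_i t_j⁻¹`, so commutation forces `p` to involve only monomials with all exponents equal, that is,
powers of `t_1 ⋯ t_n`.
-/

section SkewGroupAlgebra

variable {K L : Type*} [CommRing K] [CommRing L] [Algebra K L]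

theorem linearIndependent_algEquiv_toLinearMap [IsDomain L] :
    LinearIndependent L (AlgEquiv.toLinearMap : (L ≃ₐ[K] L) → Module.End K L) :=
  (linearIndependent_toLinearMap K L L).comp (fun σ : L ≃ₐ[K] L => (σ : L →ₐ[K] L))
    fun _ _ h => AlgEquiv.coe_toAlgHom_injective h

theorem algEquiv_toLinearMap_mul_smul (σ : L ≃ₐ[K] L) (x : L) (f : Module.End K L) :
    σ.toLinearMap * (x • f) = σ x • (σ.toLinearMap * f) := by
  ext y
  simp

/-- The image in `Module.End K L` of the skew group algebra `L ⋊ G` of a monoid `G` of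
automorphisms of `L`: the operators `∑ σ ∈ G, x_σ σ` with coefficients `x_σ` in `L`. -/
def skewGroupAlgebra (G : Submonoid (L ≃ₐ[K] L)) : Subalgebra K (Module.End K L) :=
  ((Submodule.span L (AlgEquiv.toLinearMap '' (G : Set (L ≃ₐ[K] L)))).restrictScalars
    K).toSubalgebra (Submodule.subset_span ⟨1, G.one_mem, rfl⟩) <| by
    intro f g hf hg
    rw [Submodule.restrictScalars_mem] at hf hg ⊢
    induction hf using Submodule.span_induction with
    | zero => rw [zero_mul]; exact zero_mem _
    | add f₁ f₂ _ _ h₁ h₂ => rw [add_mul]; exact add_mem h₁ h₂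
    | smul x f _ hfg => rw [smul_mul_assoc]; exact Submodule.smul_mem _ x hfg
    | mem f hf =>
      obtain ⟨σ, hσ, rfl⟩ := hf
      induction hg using Submodule.span_induction with
      | zero => rw [mul_zero]; exact zero_mem _
      | add g₁ g₂ _ _ h₁ h₂ => rw [mul_add]; exact add_mem h₁ h₂
      | smul x g _ hg => rw [algEquiv_toLinearMap_mul_smul]; exact Submodule.smul_mem _ (σ x) hg
      | mem g hg =>
        obtain ⟨τ, hτ, rfl⟩ := hg
        exact Submodule.subset_span ⟨σ * τ, G.mul_mem hσ hτ, rfl⟩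

theorem mem_skewGroupAlgebra_iff {G : Submonoid (L ≃ₐ[K] L)} {f : Module.End K L} :
    f ∈ skewGroupAlgebra G ↔ ∃ c ∈ Finsupp.supported L L (G : Set (L ≃ₐ[K] L)),
      Finsupp.linearCombination L AlgEquiv.toLinearMap c = f :=
  Finsupp.mem_span_image_iff_linearCombination L

theorem toLinearMap_mem_skewGroupAlgebra {G : Submonoid (L ≃ₐ[K] L)} {σ : L ≃ₐ[K] L}
    (hσ : σ ∈ G) : σ.toLinearMap ∈ skewGroupAlgebra G :=
  Submodule.subset_span ⟨σ, hσ, rfl⟩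

theorem mulLeft_mem_skewGroupAlgebra (G : Submonoid (L ≃ₐ[K] L)) (x : L) :
    LinearMap.mulLeft K x ∈ skewGroupAlgebra G :=
  Submodule.smul_mem (Submodule.span L (AlgEquiv.toLinearMap '' (G : Set (L ≃ₐ[K] L)))) x
    (Submodule.subset_span ⟨1, G.one_mem, rfl⟩)

variable [IsDomain L] {c : (L ≃ₐ[K] L) →₀ L} {τ : L ≃ₐ[K] L}

/-- The coefficients of a skew group algebra element are unique by Dedekind's theorem, so they are
permuted by conjugation with any automorphism the element commutes with. -/
theorem coeff_conj_of_commute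
    (h : Commute (Finsupp.linearCombination L AlgEquiv.toLinearMap c) τ.toLinearMap)
    (σ : L ≃ₐ[K] L) : c (τ * σ * τ⁻¹) = τ (c σ) := by
  have hright : Finsupp.linearCombination L AlgEquiv.toLinearMap (c.mapDomain (· * τ)) =
      Finsupp.linearCombination L AlgEquiv.toLinearMap c * τ.toLinearMap := by
    ext x
    rw [Finsupp.linearCombination_mapDomain]
    simp [Finsupp.linearCombination_apply, Finsupp.sum, LinearMap.sum_apply]
  have hleft : Finsupp.linearCombination L AlgEquiv.toLinearMap
      ((c.mapRange τ (map_zero τ)).mapDomain (τ * ·)) =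
      τ.toLinearMap * Finsupp.linearCombination L AlgEquiv.toLinearMap c := by
    ext x
    rw [Finsupp.linearCombination_mapDomain, Finsupp.linearCombination_apply,
      Finsupp.sum_mapRange_index (by simp)]
    simp [Finsupp.linearCombination_apply, Finsupp.sum, LinearMap.sum_apply]
  have heq := DFunLike.congr_fun
    (linearIndependent_algEquiv_toLinearMap (hright.trans (h.eq.trans hleft.symm))) (τ * σ)
  rw [Finsupp.mapDomain_apply (mul_right_injective τ), Finsupp.mapRange_apply] at heq
  rw [← heq, ← Finsupp.mapDomain_apply (mul_left_injective τ) c, inv_mul_cancel_right]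

theorem exists_zpow_commute_of_commute
    (h : Commute (Finsupp.linearCombination L AlgEquiv.toLinearMap c) τ.toLinearMap)
    {σ : L ≃ₐ[K] L} (hσ : c σ ≠ 0) : ∃ k : ℤ, k ≠ 0 ∧ Commute (τ ^ k) σ := by
  have hsupp : ∀ k : ℕ, τ ^ k * σ * (τ ^ k)⁻¹ ∈ c.support := fun k => by
    have hk : Commute (Finsupp.linearCombination L AlgEquiv.toLinearMap c) (τ ^ k).toLinearMap := by
      rw [AlgEquiv.pow_toLinearMap]
      exact h.pow_right k
    rwa [Finsupp.mem_support_iff, coeff_conj_of_commute hk, EmbeddingLike.map_ne_zero_iff]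
  obtain ⟨k, -, l, -, hkl, hconj⟩ := Set.infinite_univ.exists_ne_map_eq_of_mapsTo
    (fun k _ => hsupp k) c.support.finite_toSet
  refine ⟨-k + l, by omega, ?_⟩
  rw [zpow_add, zpow_neg, zpow_natCast, zpow_natCast, commute_iff_eq, mul_assoc,
    inv_mul_eq_iff_eq_mul, ← mul_assoc, ← mul_assoc, hconj, inv_mul_cancel_right]

end SkewGroupAlgebra

theorem zpowOp_map {G M : Type*} [Group G] [Monoid M] (φ : G →* M) (g : G) (z : ℤ) :
    zpowOp (φ g) (φ g⁻¹) z = φ (g ^ z) := by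
  unfold zpowOp
  split_ifs with hz
  · rw [← map_pow, ← zpow_natCast, Int.toNat_of_nonneg hz]
  · rw [← map_pow, inv_pow, ← zpow_natCast, ← zpow_neg, Int.toNat_of_nonneg (by omega), neg_neg]

theorem zpowOp_mem {M : Type*} [Monoid M] {S : Submonoid M} {u v : M} (hu : u ∈ S) (hv : v ∈ S)
    (z : ℤ) : zpowOp u v z ∈ S := by
  unfold zpowOp
  split_ifs
  exacts [S.pow_mem hu _, S.pow_mem hv _]

namespace Laur

open Multiplicative (ofAdd)

theorem mono_mul_mono (a b : Fin n →₀ ℤ) (c d : R) :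
    mono a c * mono b d = mono (a + b) (c * d) :=
  AddMonoidAlgebra.single_mul_single a b c d

theorem smul_mono (c d : R) (a : Fin n →₀ ℤ) : c • mono a d = mono a (c * d) :=
  AddMonoidAlgebra.smul_single c a d

theorem mono_zero_one : (mono 0 1 : Laur R n) = 1 :=
  rfl

theorem linearMap_ext {M : Type*} [AddCommMonoid M] [Module R M] {f g : Laur R n →ₗ[R] M}
    (h : ∀ a, f (mono a 1) = g (mono a 1)) : f = g :=
  AddMonoidAlgebra.lhom_ext' fun a => LinearMap.ext_ring (h a)

theorem mulOp_mul (x y : Laur R n) : mulOp (x * y) = mulOp x * mulOp y :=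
  LinearMap.mulLeft_mul R _ x y

theorem mulOp_mono_mul_cancel {b : Fin n →₀ ℤ} {f g : Module.End R (Laur R n)}
    (h : mulOp (mono b 1) * f = mulOp (mono b 1) * g) : f = g := by
  have hinv : mulOp (mono (-b) 1) * mulOp (mono b 1) = (1 : Module.End R (Laur R n)) := by
    rw [← mulOp_mul, mono_mul_mono, neg_add_cancel, mul_one, mono_zero_one]
    exact LinearMap.mulLeft_one R _
  simpa only [← mul_assoc, hinv, one_mul] using congrArg (mulOp (mono (-b) 1) * ·) h

theorem algEquiv_ext {σ τ : Laur R n ≃ₐ[R] Laur R n} (h : ∀ a, σ (mono a 1) = τ (mono a 1)) :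
    σ = τ :=
  AlgEquiv.toLinearMap_injective (linearMap_ext h)

@[simp]
theorem finsupp_single_one_dotProduct (i : Fin n) (v : Fin n → ℤ) :
    ⇑(Finsupp.single i (1 : ℤ)) ⬝ᵥ v = v i := by
  classical
  rw [Finsupp.single_eq_pi_single, single_one_dotProduct]

/-- The algebra endomorphisms `t^m = t_1^{m_1} ⋯ t_n^{m_n}`, which send `X^a` to `q^{m·a} X^a`. -/
def torusHom (q : Rˣ) : Multiplicative (Fin n →₀ ℤ) →* (Laur R n →ₐ[R] Laur R n) where
  toFun m := AddMonoidAlgebra.lift R _ _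
    { toFun a := mono a.toAdd ((q ^ (m.toAdd ⬝ᵥ a.toAdd) : Rˣ) : R)
      map_one' := by simp [mono_zero_one]
      map_mul' a b := by
        rw [mono_mul_mono, ← Units.val_mul, ← zpow_add, toAdd_mul, Finsupp.coe_add,
          dotProduct_add] }
  map_one' := AddMonoidAlgebra.algHom_ext (fun a => by simp [mono]) (by ext)
  map_mul' m m' := AddMonoidAlgebra.algHom_ext (fun a => by
    simp [mono, add_dotProduct, zpow_add, mul_comm]) (by ext)

/-- The action of the torus by the automorphisms `t^m = t_1^{m_1} ⋯ t_n^{m_n}`. -/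
def torusAut (q : Rˣ) : Multiplicative (Fin n →₀ ℤ) →* (Laur R n ≃ₐ[R] Laur R n) :=
  (AlgEquiv.algHomUnitsEquiv R _).toMonoidHom.comp (torusHom q).toHomUnits

theorem torusAut_mono (q : Rˣ) (m : Multiplicative (Fin n →₀ ℤ)) (a : Fin n →₀ ℤ) (c : R) :
    torusAut q m (mono a c) = ((q ^ (m.toAdd ⬝ᵥ a) : Rˣ) : R) • mono a c := by
  simp [torusAut, torusHom, mono, mul_comm]

theorem coeff_torusAut (q : Rˣ) (m : Multiplicative (Fin n →₀ ℤ)) (p : Laur R n)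
    (a : Fin n →₀ ℤ) :
    (torusAut q m p).coeff a = ((q ^ (m.toAdd ⬝ᵥ a) : Rˣ) : R) * p.coeff a := by
  classical
  induction p using AddMonoidAlgebra.induction_linear with
  | zero => simp
  | add x y hx hy => simp [hx, hy, mul_add]
  | single b c =>
    rw [show AddMonoidAlgebra.single b c = mono b c from rfl, torusAut_mono]
    obtain rfl | hab := eq_or_ne b a <;> simp [mono, *]

theorem torusAut_injective {q : Rˣ} (hq : ¬IsOfFinOrder q) :
    Function.Injective (torusAut q : Multiplicative (Fin n →₀ ℤ) →* _) := by
  intro m m' hm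
  ext i
  have hi := DFunLike.congr_fun hm (Xel i)
  rw [Xel, torusAut_mono, torusAut_mono, smul_mono, smul_mono, dotProduct_comm,
    dotProduct_comm m'.toAdd, finsupp_single_one_dotProduct, finsupp_single_one_dotProduct] at hi
  have hpow : q ^ m.toAdd i = q ^ m'.toAdd i := by
    simpa [mono, Units.val_inj] using congrArg (fun p => p.coeff (Finsupp.single i 1)) hi
  exact injective_zpow_iff_not_isOfFinOrder.mpr hq hpow

theorem dotProduct_eq_zero_of_torusAut_eq [NoZeroDivisors R] {q : Rˣ} (hq : ¬IsOfFinOrder q)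
    {m : Multiplicative (Fin n →₀ ℤ)} {p : Laur R n} (hp : torusAut q m p = p) {a : Fin n →₀ ℤ}
    (ha : p.coeff a ≠ 0) : m.toAdd ⬝ᵥ a = 0 := by
  have hcoeff : ((q ^ (m.toAdd ⬝ᵥ a) : Rˣ) : R) * p.coeff a = 1 * p.coeff a := by
    rw [← coeff_torusAut, hp, one_mul]
  have hpow : q ^ (m.toAdd ⬝ᵥ a) = q ^ (0 : ℤ) := by
    rw [zpow_zero, ← Units.val_inj, Units.val_one]
    exact mul_right_cancel₀ ha hcoeff
  exact injective_zpow_iff_not_isOfFinOrder.mpr hq hpow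

/-- The action of the symmetric group by the automorphisms permuting the variables. -/
def permAut : Equiv.Perm (Fin n) →* (Laur R n ≃ₐ[R] Laur R n) where
  toFun w := AddMonoidAlgebra.domCongr R R (Finsupp.domCongr w)
  map_one' := algEquiv_ext fun a => by
    simp [mono, Equiv.Perm.one_def]
  map_mul' w w' := algEquiv_ext fun a => by
    simp [mono, Equiv.Perm.mul_def, Finsupp.equivMapDomain_trans]

theorem permAut_mono (w : Equiv.Perm (Fin n)) (a : Fin n →₀ ℤ) (c : R) :
    permAut w (mono a c) = mono (a.equivMapDomain w) c := by
  simp [permAut, mono]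

theorem permAut_mul_torusAut (q : Rˣ) (w : Equiv.Perm (Fin n)) (m : Fin n →₀ ℤ) :
    permAut w * torusAut q (ofAdd m) = torusAut q (ofAdd (m.equivMapDomain w)) * permAut w := by
  refine algEquiv_ext fun a => ?_
  have hdot : m.equivMapDomain w ⬝ᵥ a.equivMapDomain w = m ⬝ᵥ a :=
    comp_equiv_dotProduct_comp_equiv m a w.symm
  simp only [AlgEquiv.mul_apply, torusAut_mono, permAut_mono, map_smul, toAdd_ofAdd, hdot]

theorem equivMapDomain_eq_of_commute {q : Rˣ} (hq : ¬IsOfFinOrder q)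
    {s : Fin n →₀ ℤ} {m : Multiplicative (Fin n →₀ ℤ)} {w : Equiv.Perm (Fin n)}
    (h : Commute (torusAut q (ofAdd s)) (torusAut q m * permAut w)) : s.equivMapDomain w = s := by
  have hw : Commute (torusAut q (ofAdd s)) (permAut w) := by
    simpa using ((Commute.all (ofAdd s) m).map (torusAut q)).inv_right.mul_right h
  have heq : torusAut q (ofAdd (s.equivMapDomain w)) = torusAut q (ofAdd s) :=
    mul_right_cancel ((permAut_mul_torusAut q w s).symm.trans hw.eq.symm)
  exact Multiplicative.ofAdd.injective (torusAut_injective hq heq)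

/-- The monoid `ℤⁿ ⋊ 𝔖_n` of the automorphisms `t^m w` of `Laur R n`. -/
def monomialAuts (q : Rˣ) : Submonoid (Laur R n ≃ₐ[R] Laur R n) where
  carrier := {σ | ∃ m w, σ = torusAut q m * permAut w}
  one_mem' := ⟨1, 1, by simp⟩
  mul_mem' := by
    rintro _ _ ⟨m, w, rfl⟩ ⟨m', w', rfl⟩
    refine ⟨m * ofAdd (m'.toAdd.equivMapDomain w), w * w', ?_⟩
    rw [map_mul, map_mul, mul_assoc, mul_assoc, ← mul_assoc (permAut w), ← mul_assoc _ (permAut w),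
      ← permAut_mul_torusAut, ofAdd_toAdd]

theorem torusAut_mem_monomialAuts (q : Rˣ) (m : Multiplicative (Fin n →₀ ℤ)) :
    torusAut q m ∈ monomialAuts q :=
  ⟨m, 1, by simp⟩

theorem permAut_mem_monomialAuts (q : Rˣ) (w : Equiv.Perm (Fin n)) :
    permAut w ∈ monomialAuts q :=
  ⟨1, w, by simp⟩

/-- The substitution `p ↦ p(t_1, …, t_n)` of the shift operators into Laurent polynomials. -/
def shiftEval (q : Rˣ) : Laur R n →ₐ[R] Module.End R (Laur R n) :=
  AddMonoidAlgebra.lift R _ _ ((AlgEquiv.toLinearMapHom R _).comp (torusAut q))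

theorem shiftEval_mono (q : Rˣ) (m : Fin n →₀ ℤ) (c : R) :
    shiftEval q (mono m c) = c • (torusAut q (ofAdd m)).toLinearMap :=
  AddMonoidAlgebra.lift_single _ _ _

theorem shiftEval_eq_linearCombination (q : Rˣ) (p : Laur R n) :
    shiftEval q p = Finsupp.linearCombination R
      (fun m => (torusAut q (ofAdd m)).toLinearMap) p.coeff :=
  AddMonoidAlgebra.lift_apply _ _

theorem shiftEval_injective [IsDomain R] {q : Rˣ} (hq : ¬IsOfFinOrder q) :
    Function.Injective (shiftEval q : Laur R n →ₐ[R] _) := by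
  have hconst : Function.Injective fun r : R => r • (1 : Laur R n) := fun r s hrs => by
    simpa using congrArg (fun p => p.coeff 0) hrs
  have hindep : LinearIndependent R fun m : Fin n →₀ ℤ => (torusAut q (ofAdd m)).toLinearMap :=
    (linearIndependent_algEquiv_toLinearMap.restrict_scalars hconst).comp _
      ((torusAut_injective hq).comp Multiplicative.ofAdd.injective)
  intro p p' h
  rw [shiftEval_eq_linearCombination, shiftEval_eq_linearCombination] at h
  exact AddMonoidAlgebra.ext (hindep h)

theorem shiftEval_mem_skewGroupAlgebra (q : Rˣ) (p : Laur R n) :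
    shiftEval q p ∈ skewGroupAlgebra (monomialAuts q) := by
  rw [shiftEval_eq_linearCombination]
  exact sum_mem fun m _ => Subalgebra.smul_mem _
    (toLinearMap_mem_skewGroupAlgebra (torusAut_mem_monomialAuts q _)) _

theorem shiftEval_mul_mulOp_mono (q : Rˣ) (p : Laur R n) (b : Fin n →₀ ℤ) :
    shiftEval q p * mulOp (mono b 1) =
      mulOp (mono b 1) * shiftEval q (torusAut q (ofAdd b) p) := by
  induction p using AddMonoidAlgebra.induction_linear with
  | zero => simp
  | add x y hx hy => simp only [map_add, add_mul, mul_add, hx, hy]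
  | single m c =>
    refine linearMap_ext fun a => ?_
    rw [show AddMonoidAlgebra.single m c = mono m c from rfl, torusAut_mono, map_smul,
      shiftEval_mono]
    simp [mulOp, mono_mul_mono, torusAut_mono, smul_mono, dotProduct_comm, zpow_add, mul_left_comm]

/-- The `q`-shift automorphism `t_i`. -/
def shift (q : Rˣ) (i : Fin n) : Laur R n ≃ₐ[R] Laur R n :=
  torusAut q (ofAdd (Finsupp.single i 1))

theorem shift_mono (q : Rˣ) (i : Fin n) (a : Fin n →₀ ℤ) (c : R) :
    shift q i (mono a c) = ((q ^ a i : Rˣ) : R) • mono a c := by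
  rw [shift, torusAut_mono, toAdd_ofAdd, finsupp_single_one_dotProduct]

theorem shift_inv_mono (q : Rˣ) (i : Fin n) (a : Fin n →₀ ℤ) (c : R) :
    (shift q i)⁻¹ (mono a c) = ((q ^ (-a i) : Rˣ) : R) • mono a c := by
  rw [AlgEquiv.aut_inv, AlgEquiv.symm_apply_eq, map_smul, shift_mono, smul_smul, ← Units.val_mul,
    ← zpow_add, neg_add_cancel, zpow_zero, Units.val_one, one_smul]

theorem shiftEval_Xel (q : Rˣ) (i : Fin n) : shiftEval q (Xel i) = (shift q i).toLinearMap := by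
  rw [Xel, shiftEval_mono, one_smul, shift]

theorem shiftEval_XinvEl (q : Rˣ) (i : Fin n) :
    shiftEval q (XinvEl i) = (shift q i)⁻¹.toLinearMap := by
  rw [XinvEl, shiftEval_mono, one_smul, shift, ← map_inv, ← ofAdd_neg, Finsupp.single_neg]

theorem Xel_ne_XinvEl [Nontrivial R] (i : Fin n) : (Xel i : Laur R n) ≠ XinvEl i := by
  intro h
  have hsingle : -Finsupp.single i (1 : ℤ) = Finsupp.single i 1 := by
    simpa [Xel, XinvEl, mono, Finsupp.single_apply] using
      congrArg (fun p => p.coeff (Finsupp.single i 1)) h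
  simpa using DFunLike.congr_fun hsingle i

section CommutingWithShifts

variable [IsDomain R] {q : Rˣ} {c : (Laur R n ≃ₐ[R] Laur R n) →₀ Laur R n}
  {σ : Laur R n ≃ₐ[R] Laur R n}

theorem exists_eq_torusAut_of_commute_shift (hq : ¬IsOfFinOrder q)
    (h : ∀ i, Commute (Finsupp.linearCombination (Laur R n) AlgEquiv.toLinearMap c)
      (shift q i).toLinearMap)
    (hσ : σ ∈ monomialAuts q) (hcσ : c σ ≠ 0) : ∃ m, σ = torusAut q m := by
  obtain ⟨m, w, rfl⟩ := hσ
  have hw : w = 1 := by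
    ext i
    obtain ⟨k, hk, hcomm⟩ := exists_zpow_commute_of_commute (h i) hcσ
    rw [shift, ← map_zpow, ← ofAdd_zsmul, Finsupp.smul_single, smul_eq_mul, mul_one] at hcomm
    have hsingle := equivMapDomain_eq_of_commute hq hcomm
    rw [Finsupp.equivMapDomain_single] at hsingle
    rw [Finsupp.single_left_injective hk hsingle, Equiv.Perm.one_apply]
  exact ⟨m, by rw [hw, map_one, mul_one]⟩

theorem coeff_torusAut_eq_mono_zero_of_commute_shift (hq : ¬IsOfFinOrder q)
    (h : ∀ i, Commute (Finsupp.linearCombination (Laur R n) AlgEquiv.toLinearMap c)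
      (shift q i).toLinearMap)
    (m : Multiplicative (Fin n →₀ ℤ)) :
    c (torusAut q m) = mono 0 ((c (torusAut q m)).coeff 0) := by
  have hfixed (i : Fin n) : shift q i (c (torusAut q m)) = c (torusAut q m) := by
    rw [← coeff_conj_of_commute (h i), shift, ((Commute.all _ m).map (torusAut q)).eq,
      mul_inv_cancel_right]
  have hzero (a : Fin n →₀ ℤ) (ha : (c (torusAut q m)).coeff a ≠ 0) : a = 0 := by
    ext i
    simpa using dotProduct_eq_zero_of_torusAut_eq hq (hfixed i) ha
  classical
  ext a
  by_cases ha : a = 0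
  · simp [mono, ha]
  · simpa [mono, Finsupp.single_apply, Ne.symm ha] using not_imp_comm.mp (hzero a) ha

theorem exists_eq_shiftEval_of_commute_shift (hq : ¬IsOfFinOrder q)
    {f : Module.End R (Laur R n)} (hf : f ∈ skewGroupAlgebra (monomialAuts q))
    (h : ∀ i, Commute f (shift q i).toLinearMap) : ∃ p, f = shiftEval q p := by
  obtain ⟨c, hc, rfl⟩ := mem_skewGroupAlgebra_iff.mp hf
  suffices Finsupp.linearCombination (Laur R n) AlgEquiv.toLinearMap c ∈ (shiftEval q).range from
    this.imp fun _ => Eq.symm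
  refine sum_mem fun σ hσ => ?_
  obtain ⟨m, rfl⟩ :=
    exists_eq_torusAut_of_commute_shift hq h (hc hσ) (Finsupp.mem_support_iff.mp hσ)
  refine ⟨mono m.toAdd ((c (torusAut q m)).coeff 0), linearMap_ext fun a => ?_⟩
  conv_rhs => rw [coeff_torusAut_eq_mono_zero_of_commute_shift hq h m]
  change shiftEval q _ _ = mono _ _ * torusAut q m (mono a 1)
  rw [shiftEval_mono, LinearMap.smul_apply, AlgEquiv.toLinearMap_apply, ofAdd_toAdd,
    torusAut_mono, mul_smul_comm, mono_mul_mono, zero_add, smul_comm, smul_mono _ 1]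

end CommutingWithShifts

/-- The exponent vector of `X_1 ⋯ X_n`. -/
def ones : Fin n →₀ ℤ := Finsupp.equivFunOnFinite.symm 1

/-- The linear combinations of the integer powers of `t_1 ⋯ t_n`. -/
def diagonalShifts (q : Rˣ) : Submodule R (Module.End R (Laur R n)) :=
  Submodule.span R (Set.range fun k : ℤ => (torusAut q (ofAdd ones) ^ k).toLinearMap)

theorem shiftEval_mono_zsmul_ones (q : Rˣ) (k : ℤ) :
    shiftEval q (mono (k • ones) 1 : Laur R n) = (torusAut q (ofAdd ones) ^ k).toLinearMap := by
  rw [shiftEval_mono, one_smul, ofAdd_zsmul, map_zpow]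

theorem prod_ofAdd_single : ∏ i : Fin n, ofAdd (Finsupp.single i (1 : ℤ)) = ofAdd ones := by
  rw [← ofAdd_sum]
  congr 1
  ext i
  simp [ones, Finsupp.single_apply]

theorem zpowOp_prod_shift (q : Rˣ) (k : ℤ) :
    zpowOp (((List.finRange n).map fun i => (shift q i).toLinearMap).prod)
      (((List.finRange n).map fun i => (shift q i)⁻¹.toLinearMap).reverse.prod) k =
      ((torusAut q (ofAdd ones) ^ k : Laur R n ≃ₐ[R] Laur R n)).toLinearMap := by
  have hprod : ((List.finRange n).map (shift (R := R) q)).prod = torusAut q (ofAdd ones) := by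
    rw [← prod_ofAdd_single, Fin.prod_univ_def, map_list_prod, List.map_map]
    rfl
  have hinv : ((List.finRange n).map fun i => (shift (R := R) q i)⁻¹).reverse.prod =
      (torusAut q (ofAdd ones))⁻¹ := by
    rw [← hprod, List.prod_inv_reverse, List.map_map]
    rfl
  have hmap := zpowOp_map (AlgEquiv.toLinearMapHom R (Laur R n)) (torusAut q (ofAdd ones)) k
  rw [← hinv, ← hprod, map_list_prod, map_list_prod, List.map_reverse, List.map_map,
    List.map_map, hprod] at hmap
  exact hmap

theorem exists_eq_zsmul_ones {m : Fin n →₀ ℤ} (hm : ∀ i j, m i = m j) : ∃ k : ℤ, m = k • ones := by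
  cases isEmpty_or_nonempty (Fin n) with
  | inl _ => exact ⟨0, Subsingleton.elim _ _⟩
  | inr h => exact ⟨m h.some, Finsupp.ext fun i => by simpa [ones] using hm i h.some⟩

theorem shiftEval_mem_diagonalShifts {q : Rˣ} {p : Laur R n}
    (hp : ∀ m, p.coeff m ≠ 0 → ∀ i j, m i = m j) : shiftEval q p ∈ diagonalShifts q := by
  rw [shiftEval_eq_linearCombination]
  refine sum_mem fun m hm => Submodule.smul_mem _ _ (Submodule.subset_span ?_)
  obtain ⟨k, rfl⟩ := exists_eq_zsmul_ones (hp m (Finsupp.mem_support_iff.mp hm))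
  exact ⟨k, by dsimp only; rw [ofAdd_zsmul, map_zpow]⟩

section Field

variable {F : Type*} [Field F] (q : Fˣ)

/-- The operator `E^q_{ij} = X_i d_j`, where `d_j = (q - q⁻¹)⁻¹ X_j⁻¹ (t_j - t_j⁻¹)`. -/
def qE (i j : Fin n) : Module.End F (Laur F n) :=
  mulOp (Xel i) * (((q : F) - (q : F)⁻¹)⁻¹ •
    (mulOp (XinvEl j) * ((shift q j).toLinearMap - (shift q j)⁻¹.toLinearMap)))

theorem qE_eq_smul_mulOp_mul_shiftEval (i j : Fin n) :
    qE q i j = ((q : F) - (q : F)⁻¹)⁻¹ •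
      (mulOp (mono (Finsupp.single i 1 - Finsupp.single j 1) 1) *
        shiftEval q (Xel j - XinvEl j)) := by
  rw [qE, map_sub, shiftEval_Xel, shiftEval_XinvEl, mul_smul_comm, ← mul_assoc, ← mulOp_mul, Xel,
    XinvEl, mono_mul_mono, mul_one, Finsupp.single_neg, ← sub_eq_add_neg]

variable {q}

theorem commute_shiftEval_qE {p : Laur F n} {i j : Fin n}
    (hp : torusAut q (ofAdd (Finsupp.single i 1 - Finsupp.single j 1)) p = p) :
    Commute (shiftEval q p) (qE q i j) := by
  rw [qE_eq_smul_mulOp_mul_shiftEval]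
  refine Commute.smul_right ?_ _
  rw [commute_iff_eq, ← mul_assoc, shiftEval_mul_mulOp_mono, hp, mul_assoc, mul_assoc,
    ((Commute.all p _).map (shiftEval q)).eq]

theorem torusAut_eq_of_commute_shiftEval_qE (hq : ¬IsOfFinOrder q) {p : Laur F n} {i j : Fin n}
    (h : Commute (shiftEval q p) (qE q i j)) :
    torusAut q (ofAdd (Finsupp.single i 1 - Finsupp.single j 1)) p = p := by
  have hscalar : ((q : F) - (q : F)⁻¹)⁻¹ ≠ 0 := by
    refine inv_ne_zero fun hsub => hq (isOfFinOrder_iff_pow_eq_one.mpr ⟨2, two_pos, ?_⟩)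
    have hself : q = q⁻¹ := Units.ext (by rw [sub_eq_zero.mp hsub, Units.val_inv_eq_inv_val])
    rw [sq, mul_eq_one_iff_eq_inv, ← hself]
  rw [qE_eq_smul_mulOp_mul_shiftEval, Commute.smul_right_iff₀ hscalar, commute_iff_eq, ← mul_assoc,
    shiftEval_mul_mulOp_mono, mul_assoc, mul_assoc, ← map_mul, ← map_mul, mul_comm _ p] at h
  exact mul_right_cancel₀ (sub_ne_zero.mpr (Xel_ne_XinvEl j))
    (shiftEval_injective hq (mulOp_mono_mul_cancel h))

variable (n q) in
/-- The algebra `A` generated by the `t_i^{±1}` and the `E^q_{ij}` with `i ≠ j`. -/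
def qAlgebra : Subalgebra F (Module.End F (Laur F n)) :=
  Algebra.adjoin F (qGenSet (fun i => (shift q i).toLinearMap)
    (fun i => (shift q i)⁻¹.toLinearMap) (qE q))

variable (n q) in
/-- The algebra `𝒜` generated by `A` and the permutations of the variables. -/
def qSymAlgebra : Subalgebra F (Module.End F (Laur F n)) :=
  Algebra.adjoin F (qGenSet (fun i => (shift q i).toLinearMap)
    (fun i => (shift q i)⁻¹.toLinearMap) (qE q) ∪ Set.range fun w => (permAut w).toLinearMap)

theorem qAlgebra_le_qSymAlgebra : qAlgebra n q ≤ qSymAlgebra n q :=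
  Algebra.adjoin_mono Set.subset_union_left

theorem qSymAlgebra_le_skewGroupAlgebra :
    qSymAlgebra n q ≤ skewGroupAlgebra (monomialAuts q) := by
  refine Algebra.adjoin_le ?_
  rintro _ ((⟨i, rfl⟩ | ⟨i, rfl⟩ | ⟨i, j, -, rfl⟩) | ⟨w, rfl⟩)
  · exact toLinearMap_mem_skewGroupAlgebra (torusAut_mem_monomialAuts q _)
  · exact toLinearMap_mem_skewGroupAlgebra (map_inv (torusAut q) _ ▸ torusAut_mem_monomialAuts q _)
  · rw [qE_eq_smul_mulOp_mul_shiftEval]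
    exact Subalgebra.smul_mem _ (mul_mem (mulLeft_mem_skewGroupAlgebra _ _)
      (shiftEval_mem_skewGroupAlgebra q _)) _
  · exact toLinearMap_mem_skewGroupAlgebra (permAut_mem_monomialAuts q w)

theorem mem_diagonalShifts_of_commute (hq : ¬IsOfFinOrder q) {f : Module.End F (Laur F n)}
    (hf : f ∈ skewGroupAlgebra (monomialAuts q)) (h : ∀ g ∈ qAlgebra n q, Commute f g) :
    f ∈ diagonalShifts q := by
  obtain ⟨p, rfl⟩ := exists_eq_shiftEval_of_commute_shift hq hf fun i =>
    h _ (Algebra.subset_adjoin (.inl ⟨i, rfl⟩))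
  refine shiftEval_mem_diagonalShifts fun m hm i j => ?_
  obtain rfl | hij := eq_or_ne i j
  · rfl
  have hE := h _ (Algebra.subset_adjoin (.inr (.inr ⟨i, j, hij, rfl⟩)))
  have hdot := dotProduct_eq_zero_of_torusAut_eq hq (torusAut_eq_of_commute_shiftEval_qE hq hE) hm
  simpa [sub_dotProduct, sub_eq_zero] using hdot

theorem diagonalShifts_le_qAlgebra : diagonalShifts q ≤ (qAlgebra n q).toSubmodule := by
  refine Submodule.span_le.mpr ?_
  rintro _ ⟨k, rfl⟩
  dsimp only
  rw [← zpowOp_prod_shift]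
  refine zpowOp_mem (S := (qAlgebra n q).toSubmonoid) (list_prod_mem ?_) (list_prod_mem ?_) k
  · simp only [List.mem_map]
    rintro _ ⟨i, -, rfl⟩
    exact Algebra.subset_adjoin (.inl ⟨i, rfl⟩)
  · simp only [List.mem_reverse, List.mem_map]
    rintro _ ⟨i, -, rfl⟩
    exact Algebra.subset_adjoin (.inr (.inl ⟨i, rfl⟩))

theorem qSymAlgebra_le_centralizer_torusAut_ones_zpow (k : ℤ) :
    qSymAlgebra n q ≤ Subalgebra.centralizer F {(torusAut q (ofAdd ones) ^ k).toLinearMap} := by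
  refine Algebra.adjoin_le fun g hg => ?_
  rintro _ rfl
  change Commute _ g
  obtain (⟨i, rfl⟩ | ⟨i, rfl⟩ | ⟨i, j, -, rfl⟩) | ⟨w, rfl⟩ := hg
  · dsimp only
    rw [← shiftEval_mono_zsmul_ones, ← shiftEval_Xel]
    exact (Commute.all _ _).map (shiftEval q)
  · dsimp only
    rw [← shiftEval_mono_zsmul_ones, ← shiftEval_XinvEl]
    exact (Commute.all _ _).map (shiftEval q)
  · rw [← shiftEval_mono_zsmul_ones]
    refine commute_shiftEval_qE ?_
    have hones : (k • ones : Fin n →₀ ℤ) i = (k • ones : Fin n →₀ ℤ) j := by simp [ones]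
    rw [torusAut_mono, toAdd_ofAdd, Finsupp.coe_sub, sub_dotProduct, finsupp_single_one_dotProduct,
      finsupp_single_one_dotProduct, hones, sub_self, zpow_zero, Units.val_one, one_smul]
  · have hones : (ones : Fin n →₀ ℤ).equivMapDomain w = ones := Finsupp.ext fun _ => rfl
    have hw : Commute (torusAut q (ofAdd ones)) (permAut w) := by
      rw [commute_iff_eq, permAut_mul_torusAut, hones]
    exact (hw.zpow_left k).map (AlgEquiv.toLinearMapHom F (Laur F n))

theorem commute_of_mem_diagonalShifts {f g : Module.End F (Laur F n)}
    (hf : f ∈ diagonalShifts q) (hg : g ∈ qSymAlgebra n q) : Commute f g := by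
  have hcentralizer : diagonalShifts q ≤ (Subalgebra.centralizer F {g}).toSubmodule := by
    refine Submodule.span_le.mpr ?_
    rintro _ ⟨k, rfl⟩ _ rfl
    exact (qSymAlgebra_le_centralizer_torusAut_ones_zpow k hg _ rfl).symm
  exact (hcentralizer hf g rfl).symm

theorem mem_and_forall_commute_iff_mem_diagonalShifts (hq : ¬IsOfFinOrder q)
    {B : Subalgebra F (Module.End F (Laur F n))} (hAB : qAlgebra n q ≤ B)
    (hB : B ≤ qSymAlgebra n q) {f : Module.End F (Laur F n)} :
    (f ∈ B ∧ ∀ g ∈ B, Commute f g) ↔ f ∈ diagonalShifts q :=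
  ⟨fun ⟨hf, h⟩ => mem_diagonalShifts_of_commute hq (qSymAlgebra_le_skewGroupAlgebra (hB hf))
      fun g hg => h g (hAB hg),
    fun hf => ⟨hAB (diagonalShifts_le_qAlgebra hf),
      fun _ hg => commute_of_mem_diagonalShifts hf (hB hg)⟩⟩

end Field

end Laur

/-- The centre of the algebra `𝒜 = ℂ𝔖_n ⋉ A`: an element `f ∈ 𝒜` commutes
with every element of `𝒜` iff `f` is an `F`-linear combination of the `(t_1 ⋯ t_n)^m`, `m ∈ ℤ`;
in particular the centre of `𝒜` coincides with the centre of `A`. -/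
theorem statement3
    (F : Type*) [Field F] (n : ℕ) [NeZero n]
    (q : F) (hq : q ≠ 0) (hqroot : ∀ m : ℕ, m ≠ 0 → q ^ m ≠ 1)
    -- the q-shift operators `t_i` and their inverses
    (t ti : Fin n → Module.End F (Laur F n))
    (ht : ∀ (i : Fin n) (a : Fin n →₀ ℤ) (c : F), t i (mono a c) = q ^ (a i) • mono a c)
    (hti : ∀ (i : Fin n) (a : Fin n →₀ ℤ) (c : F), ti i (mono a c) = q ^ (-(a i)) • mono a c)
    -- the operators `d_i = (q - q⁻¹)⁻¹ X_i⁻¹ (t_i - t_i⁻¹)`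
    (d : Fin n → Module.End F (Laur F n))
    (hd : ∀ i, d i = (q - q⁻¹)⁻¹ • (mulOp (XinvEl i) * (t i - ti i)))
    -- the operators `E^q_{ij} = X_i · d_j`
    (E : Fin n → Fin n → Module.End F (Laur F n))
    (hE : ∀ i j, E i j = mulOp (Xel i) * d j)
    -- the action of the symmetric group permuting the variables
    (W : Equiv.Perm (Fin n) → Module.End F (Laur F n))
    (hW : ∀ (w : Equiv.Perm (Fin n)) (a : Fin n →₀ ℤ) (c : F),
      W w (mono a c) = mono (Finsupp.equivMapDomain w a) c)
    :
    (∀ f ∈ Algebra.adjoin F (qGenSet t ti E ∪ Set.range W),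
      ((∀ g ∈ Algebra.adjoin F (qGenSet t ti E ∪ Set.range W), f * g = g * f) ↔
        f ∈ Submodule.span F (Set.range fun m : ℤ =>
              zpowOp (((List.finRange n).map t).prod)
                ((((List.finRange n).map ti).reverse).prod) m))) ∧
    {f | f ∈ Algebra.adjoin F (qGenSet t ti E ∪ Set.range W) ∧
        ∀ g ∈ Algebra.adjoin F (qGenSet t ti E ∪ Set.range W), f * g = g * f}
      = {f | f ∈ Algebra.adjoin F (qGenSet t ti E) ∧
        ∀ g ∈ Algebra.adjoin F (qGenSet t ti E), f * g = g * f} := by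
  lift q to Fˣ using hq.isUnit
  have hqfin : ¬IsOfFinOrder q := fun h => by
    obtain ⟨m, hm, hqm⟩ := isOfFinOrder_iff_pow_eq_one.mp h
    exact hqroot m hm.ne' (by rw [← Units.val_pow_eq_pow_val, hqm, Units.val_one])
  obtain rfl : t = fun i => (Laur.shift q i).toLinearMap := funext fun i =>
    Laur.linearMap_ext fun a => by simp [ht, Laur.shift_mono]
  obtain rfl : ti = fun i => (Laur.shift q i)⁻¹.toLinearMap := funext fun i =>
    Laur.linearMap_ext fun a => by simp [hti, Laur.shift_inv_mono]
  obtain rfl : W = fun w => (Laur.permAut w).toLinearMap := funext fun w =>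
    Laur.linearMap_ext fun a => by simp [hW, Laur.permAut_mono]
  obtain rfl : E = Laur.qE q := funext₂ fun i j => by rw [hE, hd, Laur.qE]
  simp only [Laur.zpowOp_prod_shift]
  have hle : Laur.qAlgebra n q ≤ Laur.qSymAlgebra n q := Laur.qAlgebra_le_qSymAlgebra
  have hcentre (f) := Laur.mem_and_forall_commute_iff_mem_diagonalShifts hqfin le_rfl hle (f := f)
  have hcentreSym (f) :=
    Laur.mem_and_forall_commute_iff_mem_diagonalShifts hqfin hle le_rfl (f := f)
  exact ⟨fun f hf => (and_iff_right hf).symm.trans (hcentreSym f),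
    Set.ext fun f => (hcentreSym f).trans (hcentre f).symm⟩
end
end

section
/- For all 1 ≤ k ≤ n−1 and 1 ≤ i ≤ n with i ∉ {k, k+1}, the operators T_k and D_i commute: T_kD_i = D_iT_k. Moreover, for all 1 ≤ k ≤ n−1, T_k^{−1}·D_k·T_k^{−1} = D_{k+1}. -/
noncomputable section

variable {R : Type*} [CommRing R] {n : ℕ}

/-!
The operator `D_i` is the product `T_i ⋯ T_{n-1} · D_n · T_{n-1} ⋯ T_i`, so the second identity only
cancels the outermost factors. The first is a formal consequence of the braid relations among the
`T_k` and of `T_k` commuting with `D_n` for `k < n - 1`: for `k + 1 < i` every factor of `D_i`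
commutes with `T_k`, while for `i < k` moving `T_k` through the left product turns it into
`T_{k-1}`, which passes `D_n` and is turned back into `T_k` by the right product.

Such a `T_k` commutes with `X_n⁻¹`, which `s_k` fixes, and with `Y_n = π⁻¹ T_1⁻¹ ⋯ T_{n-1}⁻¹`,
because moving `T_k` through the product of the inverses turns it into `T_{k+1}`, which `π⁻¹` turns
back into `T_k`.

Over the field of fractions, `T_k` becomes `p ↦ (τ - u) s_k(p) + u p` for a rational function `u`,
and the braid relation reduces to a three-term identity between the functions `u` of the three
pairs of variables involved.
-/

section Products

variable {M : Type*} [Monoid M] {f g : ℕ → M} {x : M} {s l : ℕ}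

theorem aF_zero (f : ℕ → M) (s : ℕ) : aF f s 0 = 1 := by simp [aF]

theorem aF_succ (f : ℕ → M) (s l : ℕ) : aF f s (l + 1) = f s * aF f (s + 1) l := by
  simp [aF, List.range'_succ]

theorem dF_succ (f : ℕ → M) (s l : ℕ) : dF f s (l + 1) = dF f (s + 1) l * f s := by
  simp [dF, List.range'_succ]

theorem aF_add (f : ℕ → M) (s l m : ℕ) : aF f s (l + m) = aF f s l * aF f (s + l) m := by
  rw [aF, ← List.range'_append_1, List.map_append, List.prod_append, aF, aF]

theorem op_dF (f : ℕ → M) (s l : ℕ) :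
    MulOpposite.op (dF f s l) = aF (fun k => MulOpposite.op (f k)) s l := by
  simp [dF, aF, MulOpposite.op_list_prod, Function.comp_def]

theorem commute_aF (h : ∀ k, s ≤ k → k < s + l → Commute x (f k)) : Commute x (aF f s l) := by
  refine Commute.list_prod_right _ _ fun y hy => ?_
  obtain ⟨k, hk, rfl⟩ := List.mem_map.1 hy
  rw [List.mem_range'_1] at hk
  exact h k hk.1 hk.2

theorem commute_dF (h : ∀ k, s ≤ k → k < s + l → Commute x (f k)) : Commute x (dF f s l) := by
  refine Commute.list_prod_right _ _ fun y hy => ?_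
  obtain ⟨k, hk, rfl⟩ := List.mem_map.1 (List.mem_reverse.1 hy)
  rw [List.mem_range'_1] at hk
  exact h k hk.1 hk.2

theorem aF_mul_dF_eq_one (h : ∀ k, s ≤ k → k < s + l → g k * f k = 1) :
    aF g s l * dF f s l = 1 := by
  induction l generalizing s with
  | zero => simp [aF, dF]
  | succ l ih =>
    rw [aF_succ, dF_succ, mul_assoc, ← mul_assoc (aF g (s + 1) l),
      ih fun k hsk hkl => h k (by omega) (by omega), one_mul, h s le_rfl (by omega)]

theorem dF_mul_aF_eq_one (h : ∀ k, s ≤ k → k < s + l → f k * g k = 1) :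
    dF f s l * aF g s l = 1 := by
  induction l generalizing s with
  | zero => simp [aF, dF]
  | succ l ih =>
    rw [aF_succ, dF_succ, mul_assoc, ← mul_assoc (f s), h s le_rfl (by omega), one_mul,
      ih fun k hsk hkl => h k (by omega) (by omega)]

end Products

section Braid

variable {M : Type*} [Monoid M] {f g : ℕ → M} {E : M} {i k l : ℕ}

/-- The elements `f 0, …, f (n - 2)` satisfy the relations of the braid group on `n` strands.
The values `f k` with `n ≤ k + 1` are unconstrained. -/
structure IsBraidFamily (n : ℕ) (f : ℕ → M) : Prop where
  commute : ∀ ⦃j k⦄, j + 1 < k → k + 1 < n → Commute (f j) (f k)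
  braid : ∀ ⦃k⦄, k + 2 < n → f k * f (k + 1) * f k = f (k + 1) * f k * f (k + 1)

/-- The product `f i ⋯ f (n - 2) · E · f (n - 2) ⋯ f i`: the way `D_i` is built from `D_n`. -/
def twoSidedProd (f : ℕ → M) (n : ℕ) (E : M) (i : ℕ) : M :=
  aF f i (n - 1 - i) * E * dF f i (n - 1 - i)

theorem mul_twoSidedProd_mul_eq_succ (hk : k + 1 < n) (hfg : f k * g k = 1)
    (hgf : g k * f k = 1) :
    g k * twoSidedProd f n E k * g k = twoSidedProd f n E (k + 1) := by
  have hlen : n - 1 - k = n - 1 - (k + 1) + 1 := by omega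
  rw [twoSidedProd, hlen, aF_succ, dF_succ]
  calc g k * (f k * aF f (k + 1) (n - 1 - (k + 1)) * E *
          (dF f (k + 1) (n - 1 - (k + 1)) * f k)) * g k
      = g k * f k * twoSidedProd f n E (k + 1) * (f k * g k) := by
        simp only [twoSidedProd, mul_assoc]
    _ = twoSidedProd f n E (k + 1) := by rw [hfg, hgf, one_mul, mul_one]

namespace IsBraidFamily

theorem op (hf : IsBraidFamily n f) : IsBraidFamily n fun k => MulOpposite.op (f k) where
  commute _ _ hjk hk := (hf.commute hjk hk).op
  braid k hk := by
    simpa only [MulOpposite.op_mul, mul_assoc] using congrArg MulOpposite.op (hf.braid hk)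

theorem semiconjBy_aF (hf : IsBraidFamily n f) (hik : i ≤ k) (hkl : k + 1 < i + l)
    (hln : i + l < n) : SemiconjBy (aF f i l) (f k) (f (k + 1)) := by
  obtain ⟨d, rfl⟩ := Nat.exists_eq_add_of_le hik
  obtain ⟨m, rfl⟩ : ∃ m, l = d + (2 + m) := ⟨l - d - 2, by omega⟩
  have hpair : aF f (i + d) 2 = f (i + d) * f (i + d + 1) := by simp [aF, List.range'_succ]
  have left : Commute (aF f i d) (f (i + d + 1)) :=
    (commute_aF fun j _ hj => (hf.commute (by omega) (by omega)).symm).symm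
  have middle : SemiconjBy (f (i + d) * f (i + d + 1)) (f (i + d)) (f (i + d + 1)) := by
    rw [SemiconjBy, ← mul_assoc]
    exact hf.braid (by omega)
  have right : Commute (aF f (i + d + 2) m) (f (i + d)) :=
    (commute_aF fun j hj _ => hf.commute (by omega) (by omega)).symm
  rw [aF_add, aF_add, hpair]
  exact SemiconjBy.mul_left left (middle.mul_left right)

theorem semiconjBy_dF (hf : IsBraidFamily n f) (hik : i ≤ k) (hkl : k + 1 < i + l)
    (hln : i + l < n) : SemiconjBy (dF f i l) (f (k + 1)) (f k) := by
  have h := hf.op.semiconjBy_aF hik hkl hln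
  rw [← op_dF] at h
  exact (MulOpposite.op_injective h).symm

theorem semiconjBy_aF_inv (hf : IsBraidFamily n f)
    (hfg : ∀ k, k + 1 < n → f k * g k = 1 ∧ g k * f k = 1) (hik : i ≤ k) (hkl : k + 1 < i + l)
    (hln : i + l < n) : SemiconjBy (aF g i l) (f k) (f (k + 1)) := by
  let u : Mˣ := ⟨dF f i l, aF g i l, dF_mul_aF_eq_one fun j _ _ => (hfg j (by omega)).1,
    aF_mul_dF_eq_one fun j _ _ => (hfg j (by omega)).2⟩
  exact SemiconjBy.units_inv_symm_left (a := u) (hf.semiconjBy_dF hik hkl hln)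

theorem commute_twoSidedProd (hf : IsBraidFamily n f)
    (hE : ∀ k, k + 2 < n → Commute (f k) E) (hk : k + 1 < n) (hi : i < n) (hik : i ≠ k)
    (hik' : i ≠ k + 1) : Commute (f k) (twoSidedProd f n E i) := by
  rcases hik.lt_or_gt with hlt | hgt
  · obtain ⟨m, rfl⟩ : ∃ m, k = m + 1 := ⟨k - 1, by omega⟩
    have hleft := hf.semiconjBy_aF (i := i) (k := m) (l := n - 1 - i) (by omega) (by omega)
      (by omega)
    have hright := hf.semiconjBy_dF (i := i) (k := m) (l := n - 1 - i) (by omega) (by omega)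
      (by omega)
    exact ((hleft.mul_left (hE m (by omega)).symm).mul_left hright).symm
  · have hfar : ∀ j, i ≤ j → j < i + (n - 1 - i) → Commute (f k) (f j) :=
      fun j hij hj => hf.commute (by omega) (by omega)
    exact ((commute_aF hfar).mul_right (hE k (by omega))).mul_right (commute_dF hfar)

end IsBraidFamily

end Braid

section TwistedOperators

variable {K : Type*}

/-- The operator `p ↦ (τ - u) s(p) + u p`. Over a field, a Demazure–Lusztig operator has this form
with `u` its weight `demazureLusztigWeight`. -/
def twistedOp [CommRing K] (τ u : K) (s : K ≃+* K) (p : K) : K := (τ - u) * s p + u * p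

/-- The coefficient of the identity in the Demazure–Lusztig operator
`((σ y - τ x) s + (τ - σ) y) / (y - x)`, where `ε` stands for `τ - σ`. -/
def demazureLusztigWeight [Field K] (ε x y : K) : K := ε * y / (y - x)

theorem demazureLusztigWeight_swap [Field K] (ε : K) {x y : K} (hxy : x ≠ y) :
    demazureLusztigWeight ε y x = ε - demazureLusztigWeight ε x y := by
  have hyx' : y - x ≠ 0 := sub_ne_zero.2 hxy.symm
  have hxy' : x - y ≠ 0 := sub_ne_zero.2 hxy
  unfold demazureLusztigWeight
  field_simp
  ring

theorem demazureLusztigWeight_three_term [Field K] (ε : K) {x y z : K} (hxy : x ≠ y) (hyz : y ≠ z)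
    (hxz : x ≠ z) :
    demazureLusztigWeight ε x z *
        (demazureLusztigWeight ε x y + demazureLusztigWeight ε y z - ε) =
      demazureLusztigWeight ε x y * demazureLusztigWeight ε y z := by
  have hyx' : y - x ≠ 0 := sub_ne_zero.2 hxy.symm
  have hzy' : z - y ≠ 0 := sub_ne_zero.2 hyz.symm
  have hzx' : z - x ≠ 0 := sub_ne_zero.2 hxz.symm
  unfold demazureLusztigWeight
  field_simp
  ring

theorem map_demazureLusztigWeight [Field K] (s : K ≃+* K) (ε x y : K) :
    s (demazureLusztigWeight ε x y) = demazureLusztigWeight (s ε) (s x) (s y) := by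
  simp only [demazureLusztigWeight, map_div₀, map_mul, map_sub]

theorem twistedOp_braid [CommRing K] {τ ε u v w : K} {s₁ s₂ : K ≃+* K}
    (h₁ : s₁ * s₁ = 1) (h₂ : s₂ * s₂ = 1) (hs : s₁ * s₂ * s₁ = s₂ * s₁ * s₂)
    (hτ₁ : s₁ τ = τ) (hτ₂ : s₂ τ = τ) (hu₁ : s₁ u = ε - u) (hv₁ : s₁ v = w) (hw₁ : s₁ w = v)
    (hu₂ : s₂ u = w) (hv₂ : s₂ v = ε - v) (hw₂ : s₂ w = u)
    (hrel : w * (u + v - ε) = u * v) (p : K) :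
    twistedOp τ u s₁ (twistedOp τ v s₂ (twistedOp τ u s₁ p)) =
      twistedOp τ v s₂ (twistedOp τ u s₁ (twistedOp τ v s₂ p)) := by
  have h₁p : s₁ (s₁ p) = p := DFunLike.congr_fun h₁ p
  have h₂p : s₂ (s₂ p) = p := DFunLike.congr_fun h₂ p
  have hsp : s₁ (s₂ (s₁ p)) = s₂ (s₁ (s₂ p)) := DFunLike.congr_fun hs p
  simp only [twistedOp, map_add, map_sub, map_mul, hτ₁, hτ₂, hu₁, hv₁, hw₁, hu₂, hv₂, hw₂, h₁p,
    h₂p, hsp]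
  -- Comparing coefficients, only those of `s₁ p`, `s₂ p` and `p` differ, each by a multiple of
  -- the three-term relation.
  linear_combination (-(τ - u) * s₁ p + (τ - v) * s₂ p + (v - u) * p) * hrel

end TwistedOperators

section DemazureLusztig

variable {A B : Type*} [CommRing A] [Algebra R A] [CommRing B] [Algebra R B]

/-- `T` is the Demazure–Lusztig operator `((σ y - τ x) s + (τ - σ) y) / (y - x)`, the division
being avoided by multiplying through by `y - x`. The automorphism `s` is meant to exchange `x` and
`y`, and the classical normalisation is `σ = τ⁻¹`. -/
def IsDemazureLusztig (τ σ : R) (x y : A) (s : A ≃ₐ[R] A) (T : Module.End R A) : Prop :=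
  ∀ p, (y - x) * T p = (σ • y - τ • x) * s p + (τ - σ) • (y * p)

/-- The extension of algebra automorphisms of `A` to its field of fractions. -/
def fractionAut : (A ≃ₐ[R] A) →* (FractionRing A ≃+* FractionRing A) :=
  (IsFractionRing.ringEquivOfRingEquivHom A (FractionRing A)).comp
    (MulSemiringAction.toRingAut (A ≃ₐ[R] A) A)

theorem fractionAut_algebraMap (s : A ≃ₐ[R] A) (p : A) :
    fractionAut s (algebraMap A (FractionRing A) p) = algebraMap A (FractionRing A) (s p) :=
  IsFractionRing.ringEquivOfRingEquiv_algebraMap _ p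

namespace IsDemazureLusztig

variable {τ σ : R} {x y z x' y' : A} {s s' s₁ s₂ : A ≃ₐ[R] A} {T T' T₁ T₂ : Module.End R A}

theorem map_apply [IsDomain B] (φ : A →ₐ[R] B) (hT : IsDemazureLusztig τ σ x y s T)
    {t : B ≃ₐ[R] B} {U : Module.End R B} (hU : IsDemazureLusztig τ σ (φ x) (φ y) t U)
    (hφ : ∀ p, φ (s p) = t (φ p)) (hne : φ x ≠ φ y) (p : A) : φ (T p) = U (φ p) := by
  apply mul_left_cancel₀ (sub_ne_zero.2 hne.symm)
  rw [hU, ← hφ, ← map_sub, ← map_mul, hT]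
  simp only [map_add, map_mul, map_sub, map_smul]

variable [IsDomain A]

theorem apply_mul (hT : IsDemazureLusztig τ σ x y s T) (hxy : x ≠ y) {c : A} (hc : s c = c)
    (p : A) : T (c * p) = c * T p := by
  apply mul_left_cancel₀ (sub_ne_zero.2 hxy.symm)
  rw [mul_left_comm, hT, hT, map_mul, hc, mul_left_comm y c p, ← mul_smul_comm]
  ring

theorem commute (hT : IsDemazureLusztig τ σ x y s T) (hT' : IsDemazureLusztig τ σ x' y' s' T')
    (hxy : x ≠ y) (hxy' : x' ≠ y') (hs : Commute s s') (hx : s' x = x) (hy : s' y = y)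
    (hx' : s x' = x') (hy' : s y' = y') : Commute T T' := by
  refine LinearMap.ext fun p => mul_left_cancel₀ (sub_ne_zero.2 hxy.symm) ?_
  have hsT' : s (T' p) = T' (s p) :=
    hT'.map_apply (s : A →ₐ[R] A) (t := s') (U := T') (by simpa [hx', hy'] using hT')
      (DFunLike.congr_fun hs.eq) (by simpa [hx', hy'] using hxy') p
  have hfix : ∀ a b : R, s' (a • y - b • x) = a • y - b • x := fun a b => by
    rw [map_sub, map_smul, map_smul, hx, hy]
  calc (y - x) * T (T' p)
      = (σ • y - τ • x) * T' (s p) + (τ - σ) • (y * T' p) := by rw [hT, hsT']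
    _ = T' ((σ • y - τ • x) * s p + (τ - σ) • (y * p)) := by
        rw [map_add, map_smul, hT'.apply_mul hxy' (hfix _ _), hT'.apply_mul hxy' hy]
    _ = (y - x) * T' (T p) := by
        rw [← hT, hT'.apply_mul hxy' (by rw [map_sub, hx, hy])]

theorem algebraMap_apply (hT : IsDemazureLusztig τ σ x y s T) (hxy : x ≠ y) (p : A) :
    algebraMap A (FractionRing A) (T p) =
      twistedOp (algebraMap A (FractionRing A) (algebraMap R A τ))
        (demazureLusztigWeight (algebraMap A (FractionRing A) (algebraMap R A (τ - σ)))
          (algebraMap A (FractionRing A) x) (algebraMap A (FractionRing A) y))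
        (fractionAut s) (algebraMap A (FractionRing A) p) := by
  have hne : algebraMap A (FractionRing A) y - algebraMap A (FractionRing A) x ≠ 0 :=
    sub_ne_zero.2 ((IsFractionRing.injective A (FractionRing A)).ne hxy.symm)
  have h := congrArg (algebraMap A (FractionRing A)) (hT p)
  simp only [Algebra.smul_def, map_add, map_sub, map_mul] at h
  rw [twistedOp, demazureLusztigWeight, fractionAut_algebraMap]
  simp only [map_sub]
  field_simp
  linear_combination h

theorem braid (hT₁ : IsDemazureLusztig τ σ x y s₁ T₁) (hT₂ : IsDemazureLusztig τ σ y z s₂ T₂)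
    (hxy : x ≠ y) (hyz : y ≠ z) (hxz : x ≠ z) (h₁ : s₁ * s₁ = 1) (h₂ : s₂ * s₂ = 1)
    (hs : s₁ * s₂ * s₁ = s₂ * s₁ * s₂) (hx₁ : s₁ x = y) (hz₁ : s₁ z = z) (hx₂ : s₂ x = x)
    (hy₂ : s₂ y = z) : T₁ * T₂ * T₁ = T₂ * T₁ * T₂ := by
  have hy₁ : s₁ y = x := by rw [← hx₁]; exact DFunLike.congr_fun h₁ x
  have hz₂ : s₂ z = y := by rw [← hy₂]; exact DFunLike.congr_fun h₂ y
  have hinj := IsFractionRing.injective A (FractionRing A)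
  refine LinearMap.ext fun p => hinj ?_
  simp only [Module.End.mul_apply, hT₁.algebraMap_apply hxy, hT₂.algebraMap_apply hyz]
  apply twistedOp_braid (ε := algebraMap A (FractionRing A) (algebraMap R A (τ - σ)))
    (w := demazureLusztigWeight (algebraMap A (FractionRing A) (algebraMap R A (τ - σ)))
      (algebraMap A (FractionRing A) x) (algebraMap A (FractionRing A) z))
  case hrel => exact demazureLusztigWeight_three_term _ (hinj.ne hxy) (hinj.ne hyz) (hinj.ne hxz)
  case h₁ => rw [← map_mul, h₁, map_one]
  case h₂ => rw [← map_mul, h₂, map_one]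
  case hs => simp only [← map_mul, hs]
  all_goals
    simp only [map_demazureLusztigWeight, fractionAut_algebraMap, AlgEquiv.commutes, hx₁, hy₁, hz₁,
      hx₂, hy₂, hz₂, demazureLusztigWeight_swap _ (hinj.ne hxy),
      demazureLusztigWeight_swap _ (hinj.ne hyz)]

end IsDemazureLusztig

end DemazureLusztig

section Laurent

theorem mono_mul_mono (a b : Fin n →₀ ℤ) (c d : R) :
    mono a c * mono b d = mono (a + b) (c * d) :=
  AddMonoidAlgebra.single_mul_single ..

theorem Xel_injective [Nontrivial R] : Function.Injective (Xel : Fin n → Laur R n) := fun _ _ h =>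
  Finsupp.single_left_injective one_ne_zero (AddMonoidAlgebra.single_left_injective one_ne_zero h)

theorem linearMap_ext_mono {L L' : Module.End R (Laur R n)}
    (h : ∀ a c, L (mono a c) = L' (mono a c)) : L = L' := by
  refine LinearMap.ext fun p => ?_
  induction p using AddMonoidAlgebra.induction_linear with
  | zero => rw [map_zero, map_zero]
  | add p r hp hr => rw [map_add, map_add, hp, hr]
  | single a c => exact h a c

/-- The action of the symmetric group on Laurent polynomials: `w` sends `X_i` to `X_{w i}`. -/
def permuteVars : Equiv.Perm (Fin n) →* (Laur R n ≃ₐ[R] Laur R n) where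
  toFun w := AddMonoidAlgebra.domCongr R R (Finsupp.domCongr w)
  map_one' := AlgEquiv.toLinearMap_injective <| linearMap_ext_mono fun a c => by
    simp [mono, Equiv.Perm.one_def]
  map_mul' w w' := AlgEquiv.toLinearMap_injective <| linearMap_ext_mono fun a c => by
    simp [mono, ← Finsupp.equivMapDomain_trans, Equiv.Perm.mul_def]

theorem permuteVars_mono (w : Equiv.Perm (Fin n)) (a : Fin n →₀ ℤ) (c : R) :
    permuteVars w (mono a c) = mono (Finsupp.equivMapDomain w a) c :=
  AddMonoidAlgebra.domCongr_single ..

theorem permuteVars_Xel (w : Equiv.Perm (Fin n)) (i : Fin n) :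
    permuteVars w (Xel i : Laur R n) = Xel (w i) := by
  rw [Xel, permuteVars_mono, Finsupp.equivMapDomain_single, Xel]

theorem permuteVars_XinvEl (w : Equiv.Perm (Fin n)) (i : Fin n) :
    permuteVars w (XinvEl i : Laur R n) = XinvEl (w i) := by
  rw [XinvEl, permuteVars_mono, Finsupp.equivMapDomain_single, XinvEl]

/-- The operator `π⁻¹`, sending `X_1 ↦ q X_n` and `X_{i+1} ↦ X_i` (in the one-based indexing of the
paper), as an algebra endomorphism. -/
def cyclicShift [NeZero n] (q : Rˣ) : Laur R n →ₐ[R] Laur R n :=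
  AddMonoidAlgebra.lift R _ _
    { toFun a := mono (Finsupp.equivMapDomain (finRotate n).symm a.toAdd) ↑(q ^ a.toAdd 0)
      map_one' := by
        simp [mono, AddMonoidAlgebra.one_def]
      map_mul' a b := by
        simp [mono_mul_mono, zpow_add, Finsupp.equivMapDomain_eq_mapDomain, Finsupp.mapDomain_add] }

theorem finRotate_symm_mk_succ {k : ℕ} (hk : k + 1 < n) :
    (finRotate n).symm ⟨k + 1, hk⟩ = ⟨k, Nat.lt_of_succ_lt hk⟩ := by
  obtain ⟨m, rfl⟩ : ∃ m, n = m + 1 := ⟨n - 1, by omega⟩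
  rw [Equiv.symm_apply_eq, finRotate_of_lt (Nat.succ_lt_succ_iff.1 hk)]

section CyclicShift

variable [NeZero n] {q : Rˣ}

theorem cyclicShift_mono (a : Fin n →₀ ℤ) (c : R) :
    cyclicShift q (mono a c) =
      (↑(q ^ a 0) : R) • mono (Finsupp.equivMapDomain (finRotate n).symm a) c := by
  rw [cyclicShift, mono, AddMonoidAlgebra.lift_single]
  simp [mono, mul_comm]

theorem cyclicShift_Xel {i : Fin n} (hi : i ≠ 0) :
    cyclicShift q (Xel i) = Xel ((finRotate n).symm i) := by
  rw [Xel, cyclicShift_mono, Finsupp.equivMapDomain_single, Finsupp.single_eq_of_ne hi.symm,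
    zpow_zero, Units.val_one, one_smul, Xel]

theorem cyclicShift_permuteVars_swap {i j : Fin n} (hi : i ≠ 0) (hj : j ≠ 0) (p : Laur R n) :
    cyclicShift q (permuteVars (Equiv.swap i j) p) =
      permuteVars (Equiv.swap ((finRotate n).symm i) ((finRotate n).symm j))
        (cyclicShift q p) := by
  suffices h : (cyclicShift q).toLinearMap * (permuteVars (Equiv.swap i j)).toLinearMap =
      (permuteVars (Equiv.swap ((finRotate n).symm i) ((finRotate n).symm j))).toLinearMap *
        (cyclicShift q).toLinearMap from
    LinearMap.congr_fun h p
  refine linearMap_ext_mono fun a c => ?_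
  have hzero : Equiv.swap i j 0 = 0 := Equiv.swap_apply_of_ne_of_ne hi.symm hj.symm
  have hperm := Equiv.mul_swap_eq_swap_mul (finRotate n).symm i j
  simp only [Module.End.mul_apply, AlgHom.toLinearMap_apply, AlgEquiv.toLinearMap_apply,
    permuteVars_mono, cyclicShift_mono, map_smul, Finsupp.equivMapDomain_apply, Equiv.symm_swap,
    hzero, ← Finsupp.equivMapDomain_trans]
  exact congrArg (fun w => (↑(q ^ a 0) : R) • mono (Finsupp.equivMapDomain w a) c) hperm

end CyclicShift

/-- `T` is the Demazure–Lusztig operator on Laurent polynomials attached to the variables `X_i` and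
`X_j`; the operator `T_k` of the paper is the case `j = i + 1`, `σ = τ⁻¹`. -/
def IsDemazureLusztigAt (τ σ : R) (i j : Fin n) (T : Module.End R (Laur R n)) : Prop :=
  IsDemazureLusztig τ σ (Xel i) (Xel j) (permuteVars (Equiv.swap i j)) T

namespace IsDemazureLusztigAt

variable [IsDomain R] {τ σ : R} {i j k l : Fin n} {T T' : Module.End R (Laur R n)}

theorem commute (hT : IsDemazureLusztigAt τ σ i j T) (hT' : IsDemazureLusztigAt τ σ k l T')
    (hij : i ≠ j) (hkl : k ≠ l) (hik : i ≠ k) (hil : i ≠ l) (hjk : j ≠ k) (hjl : j ≠ l) :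
    Commute T T' := by
  refine IsDemazureLusztig.commute hT hT' (Xel_injective.ne hij) (Xel_injective.ne hkl)
    ?_ ?_ ?_ ?_ ?_
  · refine Commute.map ?_ permuteVars
    rw [Commute, SemiconjBy, Equiv.mul_swap_eq_swap_mul,
      Equiv.swap_apply_of_ne_of_ne hik.symm hjk.symm,
      Equiv.swap_apply_of_ne_of_ne hil.symm hjl.symm]
  all_goals
    rw [permuteVars_Xel, Equiv.swap_apply_of_ne_of_ne]
    <;> first | assumption | (symm; assumption)

theorem braid (hT : IsDemazureLusztigAt τ σ i j T) (hT' : IsDemazureLusztigAt τ σ j k T')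
    (hij : i ≠ j) (hjk : j ≠ k) (hik : i ≠ k) : T * T' * T = T' * T * T' := by
  refine IsDemazureLusztig.braid hT hT' (Xel_injective.ne hij) (Xel_injective.ne hjk)
    (Xel_injective.ne hik) ?_ ?_ ?_ ?_ ?_ ?_ ?_
  · rw [← map_mul, Equiv.swap_mul_self, map_one]
  · rw [← map_mul, Equiv.swap_mul_self, map_one]
  · simp only [← map_mul]
    rw [Equiv.swap_mul_swap_mul_swap hij hik, Equiv.swap_comm i j, Equiv.swap_comm j k,
      Equiv.swap_mul_swap_mul_swap hjk.symm hik.symm, Equiv.swap_comm]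
  · rw [permuteVars_Xel, Equiv.swap_apply_left]
  · rw [permuteVars_Xel, Equiv.swap_apply_of_ne_of_ne hik.symm hjk.symm]
  · rw [permuteVars_Xel, Equiv.swap_apply_of_ne_of_ne hij hik]
  · rw [permuteVars_Xel, Equiv.swap_apply_left]

theorem commute_mulOp_XinvEl (hT : IsDemazureLusztigAt τ σ i j T) (hij : i ≠ j) (hli : l ≠ i)
    (hlj : l ≠ j) : Commute T (mulOp (XinvEl l)) :=
  LinearMap.ext fun p => IsDemazureLusztig.apply_mul hT (Xel_injective.ne hij)
    (by rw [permuteVars_XinvEl, Equiv.swap_apply_of_ne_of_ne hli hlj]) p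

theorem semiconjBy_cyclicShift [NeZero n] (q : Rˣ) (hT : IsDemazureLusztigAt τ σ i j T)
    (hT' : IsDemazureLusztigAt τ σ ((finRotate n).symm i) ((finRotate n).symm j) T')
    (hij : i ≠ j) (hi : i ≠ 0) (hj : j ≠ 0) :
    SemiconjBy (cyclicShift q).toLinearMap T T' := by
  refine LinearMap.ext fun p => IsDemazureLusztig.map_apply (cyclicShift q) hT
    (t := permuteVars (Equiv.swap ((finRotate n).symm i) ((finRotate n).symm j))) (U := T')
    ?_ (cyclicShift_permuteVars_swap hi hj) ?_ p
  · rwa [cyclicShift_Xel hi, cyclicShift_Xel hj]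
  · rw [cyclicShift_Xel hi, cyclicShift_Xel hj]
    exact Xel_injective.ne ((finRotate n).symm.injective.ne hij)

end IsDemazureLusztigAt

theorem isBraidFamily_of_isDemazureLusztigAt [IsDomain R] {τ σ : R}
    {T : ℕ → Module.End R (Laur R n)}
    (hT : ∀ k (hk : k + 1 < n),
      IsDemazureLusztigAt τ σ ⟨k, Nat.lt_of_succ_lt hk⟩ ⟨k + 1, hk⟩ (T k)) :
    IsBraidFamily n T where
  commute j k hjk hk := by
    refine (hT j (by omega)).commute (hT k hk) ?_ ?_ ?_ ?_ ?_ ?_ <;>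
      exact Fin.ne_of_val_ne (by dsimp only; omega)
  braid k hk := by
    refine (hT k (by omega)).braid (hT (k + 1) hk) ?_ ?_ ?_ <;>
      exact Fin.ne_of_val_ne (by dsimp only; omega)

theorem commute_cyclicShift_mul_aF_inv [IsDomain R] [NeZero n] {τ σ : R}
    {T Ti : ℕ → Module.End R (Laur R n)}
    (hT : ∀ k (hk : k + 1 < n),
      IsDemazureLusztigAt τ σ ⟨k, Nat.lt_of_succ_lt hk⟩ ⟨k + 1, hk⟩ (T k))
    (hTinv : ∀ k, k + 1 < n → T k * Ti k = 1 ∧ Ti k * T k = 1) (q : Rˣ) {k : ℕ}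
    (hk : k + 2 < n) :
    Commute (T k) ((cyclicShift q).toLinearMap * aF Ti 0 (n - 1)) := by
  have hup : SemiconjBy (aF Ti 0 (n - 1)) (T k) (T (k + 1)) :=
    (isBraidFamily_of_isDemazureLusztigAt hT).semiconjBy_aF_inv hTinv k.zero_le (by omega)
      (by omega)
  have hdown : SemiconjBy (cyclicShift q).toLinearMap (T (k + 1)) (T k) := by
    refine (hT (k + 1) hk).semiconjBy_cyclicShift q ?_ ?_ ?_ ?_
    · rw [finRotate_symm_mk_succ, finRotate_symm_mk_succ]
      exact hT k (by omega)
    all_goals exact Fin.ne_of_val_ne (by simp)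
  exact (hdown.mul_left hup).symm

theorem commute_XinvOp_last [IsDomain R] {τ σ : R} {T : ℕ → Module.End R (Laur R n)}
    (hT : ∀ k (hk : k + 1 < n),
      IsDemazureLusztigAt τ σ ⟨k, Nat.lt_of_succ_lt hk⟩ ⟨k + 1, hk⟩ (T k))
    {k : ℕ} (hk : k + 2 < n) : Commute (T k) (XinvOp (n - 1)) := by
  rw [XinvOp, dif_pos (by omega)]
  refine (hT k (by omega)).commute_mulOp_XinvEl ?_ ?_ ?_ <;>
    exact Fin.ne_of_val_ne (by dsimp only; omega)

end Laurent

theorem statement4_general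
    (R : Type*) [CommRing R] [IsDomain R] (n : ℕ) [NeZero n] (q : Rˣ) (τ σ κ : R)
    (W : Equiv.Perm (Fin n) → Module.End R (Laur R n))
    (hW : ∀ (w : Equiv.Perm (Fin n)) (a : Fin n →₀ ℤ) (c : R),
      W w (mono a c) = mono (Finsupp.equivMapDomain w a) c)
    (T Ti : ℕ → Module.End R (Laur R n))
    (hT : ∀ (k : ℕ) (hk : k + 1 < n) (p : Laur R n),
      (Xel ⟨k + 1, hk⟩ - Xel ⟨k, Nat.lt_of_succ_lt hk⟩) * T k p
        = (σ • Xel ⟨k + 1, hk⟩ - τ • Xel ⟨k, Nat.lt_of_succ_lt hk⟩)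
            * W (Equiv.swap ⟨k, Nat.lt_of_succ_lt hk⟩ ⟨k + 1, hk⟩) p
          + (τ - σ) • (Xel ⟨k + 1, hk⟩ * p))
    (hTinv : ∀ k, k + 1 < n → T k * Ti k = 1 ∧ Ti k * T k = 1)
    (piInv : Module.End R (Laur R n))
    (hpiInv : ∀ (a : Fin n →₀ ℤ) (c : R),
      piInv (mono a c)
        = (↑(q ^ a 0) : R) • mono (Finsupp.equivMapDomain (finRotate n).symm a) c)
    (Y Yi : ℕ → Module.End R (Laur R n))
    (hY : ∀ i, Y i = aF T i (n - 1 - i) * piInv * aF Ti 0 i)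
    (hYinv : ∀ i, i < n → Y i * Yi i = 1 ∧ Yi i * Y i = 1)
    (D : ℕ → Module.End R (Laur R n))
    (hD : ∀ i, D i = aF T i (n - 1 - i)
        * (κ • (XinvOp (n - 1) * (Y (n - 1) - Yi (n - 1))))
        * dF T i (n - 1 - i)) :
    (∀ k i : ℕ, k + 1 < n → i < n → i ≠ k → i ≠ k + 1 → T k * D i = D i * T k) ∧
    (∀ k : ℕ, k + 1 < n → Ti k * D k * Ti k = D (k + 1)) := by
  have hn : n - 1 < n := Nat.sub_one_lt (NeZero.ne n)
  have hWp (w : Equiv.Perm (Fin n)) : W w = (permuteVars w).toLinearMap :=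
    linearMap_ext_mono fun a c => (hW w a c).trans (permuteVars_mono w a c).symm
  have hpi : piInv = (cyclicShift q).toLinearMap :=
    linearMap_ext_mono fun a c => (hpiInv a c).trans (cyclicShift_mono a c).symm
  have hTDL (k) (hk : k + 1 < n) :
      IsDemazureLusztigAt τ σ ⟨k, Nat.lt_of_succ_lt hk⟩ ⟨k + 1, hk⟩ (T k) := fun p => by
    rw [hT, hWp, AlgEquiv.toLinearMap_apply]
  have hYn : Y (n - 1) = (cyclicShift q).toLinearMap * aF Ti 0 (n - 1) := by
    rw [hY, hpi, Nat.sub_self, aF_zero, one_mul]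
  have hTY (k) (hk : k + 2 < n) : Commute (T k) (Y (n - 1)) :=
    hYn ▸ commute_cyclicShift_mul_aF_inv hTDL hTinv q hk
  have hTYi (k) (hk : k + 2 < n) : Commute (T k) (Yi (n - 1)) :=
    Commute.units_inv_right (u := ⟨_, _, (hYinv _ hn).1, (hYinv _ hn).2⟩) (hTY k hk)
  have hTE (k) (hk : k + 2 < n) :
      Commute (T k) (κ • (XinvOp (n - 1) * (Y (n - 1) - Yi (n - 1)))) :=
    ((commute_XinvOp_last hTDL hk).mul_right ((hTY k hk).sub_right (hTYi k hk))).smul_right κ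
  obtain rfl : D = twoSidedProd T n (κ • (XinvOp (n - 1) * (Y (n - 1) - Yi (n - 1)))) := funext hD
  exact ⟨fun k i hk hi hik hik' =>
      (isBraidFamily_of_isDemazureLusztigAt hTDL).commute_twoSidedProd hTE hk hi hik hik',
    fun k hk => mul_twoSidedProd_mul_eq_succ hk (hTinv k hk).1 (hTinv k hk).2⟩

/-- In the polynomial representation of the double affine Hecke algebra of
type `GLₙ` (with the operators characterised by the hypotheses below; all indices are
`0`-based, so the paper's `X_i, Y_i, D_i` for `1 ≤ i ≤ n` are `X i, Y i, D i` for `i < n`,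
and `T_k` for `1 ≤ k ≤ n-1` is `T k` for `k + 1 < n`):
`T_k` and `D_i` commute for `i ∉ {k, k+1}`, and `T_k⁻¹ · D_k · T_k⁻¹ = D_{k+1}`. -/
theorem statement4
    (F : Type*) [Field F] (n : ℕ) [NeZero n]
    (q τ : F) (hq : q ≠ 0) (hqroot : ∀ m : ℕ, m ≠ 0 → q ^ m ≠ 1) (hτ : τ ≠ 0)
    -- the action of the symmetric group permuting the variables
    (W : Equiv.Perm (Fin n) → Module.End F (Laur F n))
    (hW : ∀ (w : Equiv.Perm (Fin n)) (a : Fin n →₀ ℤ) (c : F),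
      W w (mono a c) = mono (Finsupp.equivMapDomain w a) c)
    -- the Demazure–Lusztig operators `T_k` and their inverses `Ti k = T k + τ⁻¹ - τ`
    (T Ti : ℕ → Module.End F (Laur F n))
    (hT : ∀ (k : ℕ) (hk : k + 1 < n) (p : Laur F n),
      (Xel ⟨k + 1, hk⟩ - Xel ⟨k, Nat.lt_of_succ_lt hk⟩) * T k p
        = (τ⁻¹ • Xel ⟨k + 1, hk⟩ - τ • Xel ⟨k, Nat.lt_of_succ_lt hk⟩)
            * W (Equiv.swap ⟨k, Nat.lt_of_succ_lt hk⟩ ⟨k + 1, hk⟩) p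
          + (τ - τ⁻¹) • (Xel ⟨k + 1, hk⟩ * p))
    (hTi : ∀ k, Ti k = T k + (τ⁻¹ - τ) • (1 : Module.End F (Laur F n)))
    (hTinv : ∀ k, k + 1 < n → T k * Ti k = 1 ∧ Ti k * T k = 1)
    -- the operator `π⁻¹`
    (piInv : Module.End F (Laur F n))
    (hpiInv : ∀ (a : Fin n →₀ ℤ) (c : F),
      piInv (mono a c)
        = q ^ (a 0) • mono (Finsupp.equivMapDomain (finRotate n).symm a) c)
    -- the operators `Y_i = T_i ⋯ T_{n-1} ⬝ π⁻¹ ⬝ T_1⁻¹ ⋯ T_{i-1}⁻¹` and their inverses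
    (Y Yi : ℕ → Module.End F (Laur F n))
    (hY : ∀ i, Y i = aF T i (n - 1 - i) * piInv * aF Ti 0 i)
    (hYinv : ∀ i, i < n → Y i * Yi i = 1 ∧ Yi i * Y i = 1)
    -- the `q`-Dunkl-type operators `D_i`
    (D : ℕ → Module.End F (Laur F n))
    (hD : ∀ i, D i = aF T i (n - 1 - i)
        * ((q - q⁻¹)⁻¹ • (XinvOp (n - 1) * (Y (n - 1) - Yi (n - 1))))
        * dF T i (n - 1 - i)) :
    (∀ k i : ℕ, k + 1 < n → i < n → i ≠ k → i ≠ k + 1 → T k * D i = D i * T k) ∧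
    (∀ k : ℕ, k + 1 < n → Ti k * D k * Ti k = D (k + 1)) := by
  exact statement4_general F n (Units.mk0 q hq) τ τ⁻¹ (q - q⁻¹)⁻¹ W hW T Ti hT hTinv piInv
    (by simpa using hpiInv) Y Yi hY hYinv D hD
end
end
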